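/- arXiv:1603.05553 — 8 statements merged into one kernel-verified Lean document; each statement's English description precedes it below -/
import Mathlib

section
/- Let G be a finite simple graph with m edges and minimum degree at least 2, and suppose there exists k ≥ 1 such that every entry of P̃^k is strictly positive. Let f₀ be any probability distribution on the vertices of G. Define the distribution f̃₀ on darts by f̃₀((u,v)) = f₀(u)/d_u, and for t ≥ 0 define f_t : V → ℝ by f_t(u) = Σ_{v ∼ u} (f̃₀ P̃^t)((u,v)). Then for every vertex u, f_t(u) converges to π(u) = d_u / vol(G) as t → ∞, where vol(G) = Σ_{v ∈ V} d_v = 2m. -/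
/-!
The non-backtracking matrix `P̃` is doubly stochastic: the row of a dart ending at `v` and
the column of a dart starting at `v` both have `d_v - 1` nonzero entries, all equal to
`1 / (d_v - 1)`. Hence the uniform distribution on darts is stationary.

If every entry of a doubly stochastic `Q` of size `N` is at least `δ`, then on vectors of total mass
zero `Q` acts as `Q - δ J`, with `J` the all-ones matrix. This matrix is nonnegative with row sums
`1 - N δ`, so `Q` contracts the `ℓ¹` norm of such vectors by that factor (`sum_abs_vecMul_le`). Taking
`Q = P̃ ^ k` for `δ > 0`, and `Q = P̃ ^ r` with `δ = 0` for the remaining steps, the distance to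
the uniform distribution tends to zero (`tendsto_vecMul_pow`). Exactly `d_u` darts start at `u`, so
the uniform distribution on the `vol(G)` darts gives `u` the mass `d_u / vol(G)`.
-/

open BigOperators Finset Filter

/-- The non-backtracking transition matrix of a graph, indexed by darts:
`P̃((u,v),(x,y)) = 1/(d_v - 1)` if `v = x` and `y ≠ u`, and `0` otherwise. -/
noncomputable def nbTransition {V : Type*} [Fintype V] [DecidableEq V]
    (G : SimpleGraph V) [DecidableRel G.Adj] :
    Matrix G.Dart G.Dart ℝ :=
  fun e f => if e.snd = f.fst ∧ f.snd ≠ e.fst then 1 / ((G.degree e.snd : ℝ) - 1) else 0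

/-- Doeblin contraction: a doubly stochastic matrix with entries at least `δ` contracts the `ℓ¹` norm
of a vector of total mass zero by the factor `1 - N δ`. -/
lemma sum_abs_vecMul_le {n : Type*} [Fintype n] [DecidableEq n] {Q : Matrix n n ℝ}
    (hQ : Q ∈ doublyStochastic ℝ n) {δ : ℝ} (hδ : ∀ i j, δ ≤ Q i j) (y : n → ℝ)
    (hy : ∑ i, y i = 0) :
    ∑ j, |Matrix.vecMul y Q j| ≤ (1 - Fintype.card n * δ) * ∑ i, |y i| := by
  have h1 : ∀ j, |Matrix.vecMul y Q j| ≤ ∑ i, |y i| * (Q i j - δ) := by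
    intro j
    have : Matrix.vecMul y Q j = ∑ i, y i * (Q i j - δ) := by
      simp only [Matrix.vecMul, dotProduct, mul_sub, Finset.sum_sub_distrib, ← Finset.sum_mul, hy]
      ring
    rw [this]
    refine (Finset.abs_sum_le_sum_abs _ _).trans (le_of_eq ?_)
    refine Finset.sum_congr rfl fun i _ => ?_
    rw [abs_mul, abs_of_nonneg (sub_nonneg.2 (hδ i j))]
  refine (Finset.sum_le_sum fun j _ => h1 j).trans (le_of_eq ?_)
  rw [Finset.sum_comm, Finset.mul_sum]
  refine Finset.sum_congr rfl fun i _ => ?_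
  rw [← Finset.mul_sum, Finset.sum_sub_distrib, sum_row_of_mem_doublyStochastic hQ]
  simp
  ring

lemma sum_vecMul_of_mem_doublyStochastic {n : Type*} [Fintype n] [DecidableEq n]
    {Q : Matrix n n ℝ} (hQ : Q ∈ doublyStochastic ℝ n) (y : n → ℝ) :
    ∑ j, Matrix.vecMul y Q j = ∑ i, y i := by
  simp only [Matrix.vecMul, dotProduct]
  rw [Finset.sum_comm]
  simp [← Finset.mul_sum, sum_row_of_mem_doublyStochastic hQ]

/-- A doubly stochastic matrix with an entrywise positive power drives every vector of total mass `1`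
to the uniform distribution. -/
lemma tendsto_vecMul_pow {n : Type*} [Fintype n] [DecidableEq n] [Nonempty n] {P : Matrix n n ℝ}
    (hP : P ∈ doublyStochastic ℝ n) {k : ℕ} (hk : 1 ≤ k) (hpos : ∀ i j, 0 < (P ^ k) i j)
    (x : n → ℝ) (hx : ∑ i, x i = 1) (e : n) :
    Tendsto (fun t : ℕ => Matrix.vecMul x (P ^ t) e) atTop (nhds (1 / (Fintype.card n : ℝ))) := by
  have hN : (0 : ℝ) < Fintype.card n := by exact_mod_cast Fintype.card_pos
  obtain ⟨p, hp⟩ := Finite.exists_min (fun p : n × n => (P ^ k) p.1 p.2)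
  set δ := (P ^ k) p.1 p.2 with hδdef
  have hδ : ∀ i j, δ ≤ (P ^ k) i j := fun i j => hp (i, j)
  have hδpos : 0 < δ := hpos _ _
  set c : ℝ := 1 - Fintype.card n * δ with hc
  have hc1 : c < 1 := by
    have := mul_pos hN hδpos
    linarith
  have hc0 : 0 ≤ c := by
    have h := Finset.sum_le_sum fun j (_ : j ∈ Finset.univ) => hδ e j
    rw [sum_row_of_mem_doublyStochastic (pow_mem hP k)] at h
    simp at h
    linarith
  set y : n → ℝ := x - (1 / (Fintype.card n : ℝ)) • (1 : n → ℝ) with hydef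
  have hy : ∑ i, y i = 0 := by
    simp [hydef, hx, hN.ne']
  have hyt : ∀ t, ∑ i, Matrix.vecMul y (P ^ t) i = 0 := fun t => by
    rw [sum_vecMul_of_mem_doublyStochastic (pow_mem hP t), hy]
  have hdiff : ∀ t, Matrix.vecMul y (P ^ t) e
      = Matrix.vecMul x (P ^ t) e - 1 / (Fintype.card n : ℝ) := fun t => by
    rw [hydef, Matrix.sub_vecMul, Matrix.smul_vecMul,
      one_vecMul_of_mem_doublyStochastic (pow_mem hP t)]
    simp
  have hgeom : ∀ j, ∑ i, |Matrix.vecMul y (P ^ (k * j)) i| ≤ c ^ j * ∑ i, |y i| := by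
    intro j
    induction j with
    | zero => simp
    | succ j ih =>
      have h := sum_abs_vecMul_le (pow_mem hP k) hδ _ (hyt (k * j))
      rw [Matrix.vecMul_vecMul, ← pow_add] at h
      calc _ ≤ _ := h
        _ ≤ c * (c ^ j * ∑ i, |y i|) := mul_le_mul_of_nonneg_left ih hc0
        _ = _ := by ring
  have hbound : ∀ t, |Matrix.vecMul y (P ^ t) e| ≤ c ^ (t / k) * ∑ i, |y i| := by
    intro t
    -- The `t % k` steps beyond the last multiple of `k` do not increase the `ℓ¹` norm.
    have h := sum_abs_vecMul_le (pow_mem hP (t % k))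
      (fun i j => nonneg_of_mem_doublyStochastic (pow_mem hP (t % k))) _ (hyt (k * (t / k)))
    rw [Matrix.vecMul_vecMul, ← pow_add, Nat.div_add_mod, mul_zero, sub_zero, one_mul] at h
    exact (Finset.single_le_sum (f := fun i => |Matrix.vecMul y (P ^ t) i|)
      (fun i _ => abs_nonneg _) (Finset.mem_univ e)).trans (h.trans (hgeom _))
  have hlim : Tendsto (fun t : ℕ => c ^ (t / k) * ∑ i, |y i|) atTop (nhds 0) := by
    have := ((tendsto_pow_atTop_nhds_zero_of_lt_one hc0 hc1).comp
      (Nat.tendsto_div_const_atTop (by omega : k ≠ 0))).mul_const (∑ i, |y i|)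
    simpa using this
  have h0 : Tendsto (fun t => Matrix.vecMul y (P ^ t) e) atTop (nhds 0) :=
    squeeze_zero_norm hbound hlim
  simp only [hdiff] at h0
  simpa using h0.add_const (1 / (Fintype.card n : ℝ))

/-- The number of darts leaving `v` and avoiding the neighbour `u` of `v` is `d_v - 1`. -/
lemma card_darts_fst_ne {V : Type*} [Fintype V] [DecidableEq V]
    (G : SimpleGraph V) [DecidableRel G.Adj] {u v : V} (h : G.Adj v u) :
    (#{f : G.Dart | v = f.fst ∧ f.snd ≠ u} : ℝ) = G.degree v - 1 := by
  have h1 : ({f : G.Dart | v = f.fst ∧ f.snd ≠ u} : Finset G.Dart)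
      = ({f : G.Dart | f.fst = v} : Finset G.Dart).erase ⟨(v, u), h⟩ := by
    ext f
    simp only [Finset.mem_filter, Finset.mem_univ, true_and, Finset.mem_erase, ne_eq,
      SimpleGraph.Dart.ext_iff, Prod.ext_iff]
    grind
  rw [h1, Finset.card_erase_of_mem (by simp), G.dart_fst_fiber_card_eq_degree,
    Nat.cast_pred ((G.degree_pos_iff_exists_adj v).2 ⟨u, h⟩)]

lemma nbTransition_mem_doublyStochastic {V : Type*} [Fintype V] [DecidableEq V]
    (G : SimpleGraph V) [DecidableRel G.Adj] (hdeg : ∀ v : V, 2 ≤ G.degree v) :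
    nbTransition G ∈ doublyStochastic ℝ G.Dart := by
  have hd : ∀ v, (0 : ℝ) < (G.degree v : ℝ) - 1 := fun v => by
    have : (2 : ℝ) ≤ G.degree v := by exact_mod_cast hdeg v
    linarith
  rw [mem_doublyStochastic_iff_sum]
  refine ⟨fun e f => ?_, fun e => ?_, fun f => ?_⟩
  · unfold nbTransition
    split_ifs
    · exact (one_div_pos.2 (hd _)).le
    · exact le_rfl
  · unfold nbTransition
    rw [← Finset.sum_filter, Finset.sum_const, nsmul_eq_mul, card_darts_fst_ne G e.adj.symm]
    exact mul_one_div_cancel (ne_of_gt (hd _))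
  · -- Reversing darts turns the column sum at `f` into a count of darts leaving `f.fst`.
    have h : ∀ e : G.Dart, nbTransition G e.symm f
        = if f.fst = e.fst ∧ e.snd ≠ f.snd then 1 / ((G.degree f.fst : ℝ) - 1) else 0 := by
      intro e
      have hcongr : ∀ {a b : V}, a = b →
          1 / ((G.degree a : ℝ) - 1) = 1 / ((G.degree b : ℝ) - 1) := by
        rintro a _ rfl
        rfl
      change (if e.fst = f.fst ∧ f.snd ≠ e.snd then 1 / ((G.degree e.fst : ℝ) - 1) else 0) = _
      split_ifs with h1 h2 h2
      · exact hcongr h1.1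
      · exact absurd ⟨h1.1.symm, h1.2.symm⟩ h2
      · exact absurd ⟨h2.1.symm, h2.2.symm⟩ h1
      · rfl
    rw [← Equiv.sum_comp (SimpleGraph.Dart.symm_involutive (G := G)).toPerm]
    simp only [Function.Involutive.coe_toPerm, h]
    rw [← Finset.sum_filter, Finset.sum_const, nsmul_eq_mul, card_darts_fst_ne G f.adj]
    exact mul_one_div_cancel (ne_of_gt (hd _))

/-- Starting from any distribution on the vertices, lifted to darts by
`f̃₀((u,v)) = f₀(u)/d_u`, the vertex distribution of the non-backtracking random walk after
`t` steps converges to the stationary distribution `π(u) = d_u / vol(G)`. -/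
theorem nbWalk_vertex_distribution_converges {V : Type*} [Fintype V] [DecidableEq V]
    (G : SimpleGraph V) [DecidableRel G.Adj]
    (hdeg : ∀ v : V, 2 ≤ G.degree v)
    (hprim : ∃ k : ℕ, 1 ≤ k ∧ ∀ e f : G.Dart, 0 < (nbTransition G ^ k) e f)
    (f₀ : V → ℝ) (hf₀ : ∀ v, 0 ≤ f₀ v) (hsum : ∑ v : V, f₀ v = 1) :
    ∀ u : V,
      Tendsto
        (fun t : ℕ =>
          ∑ e ∈ Finset.univ.filter (fun e : G.Dart => e.fst = u),
            Matrix.vecMul (fun e : G.Dart => f₀ e.fst / (G.degree e.fst : ℝ))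
              (nbTransition G ^ t) e)
        atTop
        (nhds ((G.degree u : ℝ) / (∑ v : V, (G.degree v : ℝ)))) := by
  obtain ⟨k, hk, hpos⟩ := hprim
  intro u
  have hV : (0 : ℕ) < G.degree u := by have := hdeg u; omega
  obtain ⟨w, hw⟩ := (G.degree_pos_iff_exists_adj u).1 hV
  have : Nonempty G.Dart := ⟨⟨(u, w), hw⟩⟩
  have hmass : ∑ e : G.Dart, f₀ e.fst / (G.degree e.fst : ℝ) = 1 := by
    rw [← hsum, ← Finset.sum_fiberwise (Finset.univ : Finset G.Dart) (fun e => e.fst)]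
    refine Finset.sum_congr rfl fun v _ => ?_
    have hv : (G.degree v : ℝ) ≠ 0 := by
      have := hdeg v
      exact_mod_cast (by omega : G.degree v ≠ 0)
    rw [Finset.sum_congr rfl (g := fun _ => f₀ v / (G.degree v : ℝ))
      (fun e he => by rw [(Finset.mem_filter.1 he).2]), Finset.sum_const,
      G.dart_fst_fiber_card_eq_degree, nsmul_eq_mul, mul_div_cancel₀ _ hv]
  have h := tendsto_finsetSum (Finset.univ.filter fun e : G.Dart => e.fst = u) fun e _ =>
    tendsto_vecMul_pow (nbTransition_mem_doublyStochastic G hdeg) hk hpos _ hmass e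
  rw [Finset.sum_const, G.dart_fst_fiber_card_eq_degree, G.dart_card_eq_sum_degrees, nsmul_eq_mul,
    mul_one_div, Nat.cast_sum] at h
  exact h
end

section
/- Let G be a finite simple graph on n ≥ 2 vertices with minimum degree at least 2. For g : V → ℝ with g ≠ 0 define the Rayleigh quotient R(g) = ( Σ_{{u,v} ∈ E} (g(u) − g(v))² ) / ( Σ_{v ∈ V} g(v)² d_v ), and for f : darts → ℝ with f ≠ 0 define R̃(f) = (1/2) · ( Σ over pairs of darts (u,v), (v,w) with w ≠ u of (f(u,v) − f(v,w))² / (d_v − 1) ) / ( Σ over darts e of f(e)² ). Let λ₁(L) be the infimum of R(g) over all g ≠ 0 with Σ_{v ∈ V} g(v) d_v = 0, and let λ₁(L̃) be the infimum of R̃(f) over all f ≠ 0 with Σ over darts e of f(e) = 0. Then λ₁(L̃) ≤ λ₁(L). -/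
/-!
A vertex function `g` lifts to the dart function `e ↦ g e.fst`. A sum over darts of a function of
the source weights each vertex by its degree (`sum_dart_fst`), so the lift of a function orthogonal
to the degree vector is orthogonal to the constants, and the two denominators agree. In the
numerator, a dart `(u, v)` has exactly `d_v - 1` non-backtracking continuations `(v, w)`, each
contributing `(g u - g v)² / (d_v - 1)`; together they contribute `(g u - g v)²`, and each edge
comes from two darts, which cancels the factor `1 / 2`. Hence the lift preserves the Rayleigh
quotient exactly (`dartRayleigh_lift`), so the infimum over dart functions is taken over a larger
set of values. Passing to real infima uses that dart quotients are nonnegative and that, for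
`n ≥ 2`, some nonzero vertex function is orthogonal to the degree vector.
-/

open BigOperators Finset

/-- The Rayleigh quotient of the normalized Laplacian of `G` at a vertex function `g`. -/
noncomputable def vertexRayleigh {V : Type*} [Fintype V] [DecidableEq V]
    (G : SimpleGraph V) [DecidableRel G.Adj] (g : V → ℝ) : ℝ :=
  (∑ e ∈ G.edgeFinset, Sym2.lift ⟨fun u v => (g u - g v) ^ 2, fun u v => by ring⟩ e) /
    (∑ v : V, g v ^ 2 * (G.degree v : ℝ))

/-- The Rayleigh quotient of the directed Laplacian of the non-backtracking walk at a dart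
function `f`. -/
noncomputable def dartRayleigh {V : Type*} [Fintype V] [DecidableEq V]
    (G : SimpleGraph V) [DecidableRel G.Adj] (f : G.Dart → ℝ) : ℝ :=
  (1 / 2) *
    (∑ e : G.Dart, ∑ e' : G.Dart,
        if e.snd = e'.fst ∧ e'.snd ≠ e.fst then
          (f e - f e') ^ 2 / ((G.degree e.snd : ℝ) - 1) else 0) /
    (∑ e : G.Dart, f e ^ 2)

section Lift

variable {V : Type*} [Fintype V] [DecidableEq V] (G : SimpleGraph V) [DecidableRel G.Adj]

lemma sum_dart_fst (h : V → ℝ) :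
    ∑ e : G.Dart, h e.fst = ∑ v : V, h v * (G.degree v : ℝ) := by
  rw [← Finset.sum_fiberwise_of_maps_to (s := Finset.univ) (t := Finset.univ)
    (g := fun e : G.Dart => e.fst) (fun _ _ => Finset.mem_univ _)]
  refine Finset.sum_congr rfl fun v _ => ?_
  rw [Finset.sum_congr rfl (g := fun _ => h v)
    (fun e he => by rw [(Finset.mem_filter.1 he).2]), Finset.sum_const,
    G.dart_fst_fiber_card_eq_degree, nsmul_eq_mul, mul_comm]

lemma sum_dart_edge (F : Sym2 V → ℝ) :
    ∑ e : G.Dart, F e.edge = 2 * ∑ e ∈ G.edgeFinset, F e := by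
  rw [← Finset.sum_fiberwise_of_maps_to (s := Finset.univ) (t := G.edgeFinset)
    (g := fun e : G.Dart => e.edge)
    (fun e _ => SimpleGraph.mem_edgeFinset.2 e.edge_mem), Finset.mul_sum]
  refine Finset.sum_congr rfl fun a ha => ?_
  rw [Finset.sum_congr rfl (g := fun _ => F a)
    (fun e he => by rw [(Finset.mem_filter.1 he).2]), Finset.sum_const,
    G.dart_edge_fiber_card a (SimpleGraph.mem_edgeFinset.1 ha), nsmul_eq_mul]
  norm_num

/-- A dart `(u, v)` has `d_v - 1` non-backtracking continuations: all darts leaving `v` except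
the reversal of `(u, v)`. -/
lemma card_nonbacktracking (e : G.Dart) :
    #{e' : G.Dart | e.snd = e'.fst ∧ e'.snd ≠ e.fst} = G.degree e.snd - 1 := by
  have h : ({e' : G.Dart | e.snd = e'.fst ∧ e'.snd ≠ e.fst} : Finset G.Dart) =
      ({e' : G.Dart | e'.fst = e.snd} : Finset G.Dart).erase e.symm := by
    ext e'
    simp only [Finset.mem_filter, Finset.mem_univ, true_and, Finset.mem_erase]
    constructor
    · rintro ⟨h1, h2⟩
      refine ⟨?_, h1.symm⟩
      rintro rfl
      exact h2 rfl
    · rintro ⟨h1, h2⟩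
      exact ⟨h2.symm, fun h3 => h1 (SimpleGraph.Dart.ext _ _ (Prod.ext h2 h3))⟩
  rw [h, Finset.card_erase_of_mem (by simp), G.dart_fst_fiber_card_eq_degree]

/-- Pulling a vertex function back along the source map preserves the Rayleigh quotient. -/
lemma dartRayleigh_lift (hdeg : ∀ v : V, 2 ≤ G.degree v) (g : V → ℝ) :
    dartRayleigh G (fun e => g e.fst) = vertexRayleigh G g := by
  have hinner : ∀ e : G.Dart, (∑ e' : G.Dart,
      if e.snd = e'.fst ∧ e'.snd ≠ e.fst then
        (g e.fst - g e'.fst) ^ 2 / ((G.degree e.snd : ℝ) - 1) else 0) =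
      (g e.fst - g e.snd) ^ 2 := by
    intro e
    have hd : (2 : ℝ) ≤ G.degree e.snd := by exact_mod_cast hdeg e.snd
    have hd' : (G.degree e.snd : ℝ) - 1 ≠ 0 := by linarith
    rw [← Finset.sum_filter, Finset.sum_congr rfl
      (g := fun _ => (g e.fst - g e.snd) ^ 2 / ((G.degree e.snd : ℝ) - 1))
      (fun e' he' => by rw [← (Finset.mem_filter.1 he').2.1]), Finset.sum_const,
      card_nonbacktracking, nsmul_eq_mul, Nat.cast_sub (by linarith [hdeg e.snd]), Nat.cast_one,
      mul_div_cancel₀ _ hd']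
  unfold dartRayleigh vertexRayleigh
  simp only [hinner]
  rw [sum_dart_fst G (fun v => g v ^ 2)]
  have h := sum_dart_edge G (Sym2.lift ⟨fun u v => (g u - g v) ^ 2, fun u v => by ring⟩)
  have h' : ∑ e : G.Dart, (g e.fst - g e.snd) ^ 2 = _ := h
  rw [h']
  congr 1
  ring

lemma dartRayleigh_nonneg (hdeg : ∀ v : V, 2 ≤ G.degree v) (f : G.Dart → ℝ) :
    0 ≤ dartRayleigh G f := by
  refine div_nonneg (mul_nonneg (by norm_num) (Finset.sum_nonneg fun e _ =>
    Finset.sum_nonneg fun e' _ => ?_)) (Finset.sum_nonneg fun e _ => sq_nonneg _)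
  have hd : (2 : ℝ) ≤ G.degree e.snd := by exact_mod_cast hdeg e.snd
  split_ifs
  · exact div_nonneg (sq_nonneg _) (by linarith)
  · exact le_rfl

/-- With at least two vertices `a ≠ b`, the function `d_b` at `a`, `-d_a` at `b`, zero elsewhere,
is orthogonal to the degree vector. -/
lemma exists_orthogonal (hn : 2 ≤ Fintype.card V) (hdeg : ∀ v : V, 2 ≤ G.degree v) :
    ∃ g : V → ℝ, g ≠ 0 ∧ (∑ v : V, g v * (G.degree v : ℝ)) = 0 := by
  obtain ⟨a, b, hab⟩ := Fintype.one_lt_card_iff.1 hn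
  refine ⟨Pi.single a (G.degree b : ℝ) - Pi.single b (G.degree a : ℝ), fun h => ?_, ?_⟩
  · have h1 := congrFun h a
    have h2 := hdeg b
    simp [hab] at h1
    omega
  · simp [sub_mul, Finset.sum_sub_distrib, Pi.single_apply, mul_comm]

end Lift

/-- The second smallest eigenvalue of the directed Laplacian of the non-backtracking walk is
at most the second smallest eigenvalue of the normalized Laplacian. -/
theorem dart_lambda_one_le_vertex_lambda_one {V : Type*} [Fintype V] [DecidableEq V]
    (G : SimpleGraph V) [DecidableRel G.Adj]
    (hn : 2 ≤ Fintype.card V) (hdeg : ∀ v : V, 2 ≤ G.degree v) :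
    sInf {x : ℝ | ∃ f : G.Dart → ℝ, f ≠ 0 ∧ (∑ e : G.Dart, f e) = 0 ∧ x = dartRayleigh G f} ≤
      sInf {x : ℝ | ∃ g : V → ℝ, g ≠ 0 ∧ (∑ v : V, g v * (G.degree v : ℝ)) = 0 ∧
        x = vertexRayleigh G g} := by
  obtain ⟨g₀, hg₀, hs₀⟩ := exists_orthogonal G hn hdeg
  refine csInf_le_csInf ⟨0, ?_⟩ ⟨_, g₀, hg₀, hs₀, rfl⟩ ?_
  · rintro x ⟨f, -, -, rfl⟩
    exact dartRayleigh_nonneg G hdeg f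
  · rintro x ⟨g, hg, hs, rfl⟩
    refine ⟨fun e => g e.fst, fun h => hg (funext fun v => ?_), ?_,
      (dartRayleigh_lift G hdeg g).symm⟩
    -- the lift is nonzero because every vertex is the source of some dart
    · obtain ⟨w, hw⟩ := (G.degree_pos_iff_exists_adj v).1 (by linarith [hdeg v])
      exact congrFun h ⟨(v, w), hw⟩
    · rw [sum_dart_fst, hs]
end

section
/- (Ihara's Theorem) Let G be a finite simple graph with n vertices, m edges, and minimum degree at least 2 (so that m ≥ n). Let A be the adjacency matrix of G, D the diagonal degree matrix, and B the 2m × 2m non-backtracking edge adjacency matrix indexed by darts, with B((u,v),(x,y)) = 1 if v = x and y ≠ u, and 0 otherwise. Then for every real number u, det(I_{2m} − u·B) = (1 − u²)^{m − n} · det(I_n − u·A + u²·(D − I_n)). -/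
/-!
Write `S(e, v) = [e.snd = v]`, `T(v, f) = [f.fst = v]` and `J(e, f) = [f = e.symm]`, so that
`B = S T - J` and `1 - u B = (1 + u J) - u S T`. Since `J² = 1`, one has
`(1 + u J)(1 - u J) = (1 - u²)`, and grouping the darts by edges gives
`det (1 + u J) = (1 - u²)^m`. For `u² ≠ 1`, pulling out the factor `1 + u J` and using
`det (1 - X Y) = det (1 - Y X)` (Sylvester) turns the determinant over darts into
`(1 - u²)^m det (1 - u / (1 - u²) • T (1 - u J) S)`, a determinant over vertices. As `T S = A` and
`T J S = D`, this is the asserted formula with `(1 - u²)^n` cleared. The excluded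
values `u = ±1` follow because both sides are continuous in `u`.
-/

open BigOperators Finset

/-- The non-backtracking edge adjacency matrix `B` of a graph, indexed by darts:
`B((u,v),(x,y)) = 1` if `v = x` and `y ≠ u`, and `0` otherwise. -/
def nbAdjMatrix {V : Type*} [Fintype V] [DecidableEq V]
    (G : SimpleGraph V) [DecidableRel G.Adj] :
    Matrix G.Dart G.Dart ℝ :=
  fun e f => if e.snd = f.fst ∧ f.snd ≠ e.fst then 1 else 0

/-- The dart-by-vertex incidence matrix of heads: `S(e, v) = 1` if `e` ends at `v`. -/
def headMatrix {V : Type*} [DecidableEq V] (G : SimpleGraph V) : Matrix G.Dart V ℝ :=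
  fun e v => if e.snd = v then 1 else 0

/-- The vertex-by-dart incidence matrix of tails: `T(v, f) = 1` if `f` starts at `v`. -/
def tailMatrix {V : Type*} [DecidableEq V] (G : SimpleGraph V) : Matrix V G.Dart ℝ :=
  fun v f => if f.fst = v then 1 else 0

/-- The permutation matrix of dart reversal: `J(e, f) = 1` if `f` is the reverse of `e`. -/
def flipMatrix {V : Type*} [DecidableEq V] (G : SimpleGraph V) : Matrix G.Dart G.Dart ℝ :=
  fun e f => if f = e.symm then 1 else 0

section

variable {V : Type*} [Fintype V] [DecidableEq V] (G : SimpleGraph V) [DecidableRel G.Adj]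

lemma nbAdjMatrix_eq : nbAdjMatrix G = headMatrix G * tailMatrix G - flipMatrix G := by
  ext e f
  simp only [nbAdjMatrix, Matrix.sub_apply, Matrix.mul_apply, headMatrix, tailMatrix, flipMatrix,
    ite_mul, one_mul, zero_mul, Finset.sum_ite_eq, Finset.mem_univ, if_true]
  have h : f = e.symm ↔ f.fst = e.snd ∧ f.snd = e.fst := by
    rw [SimpleGraph.Dart.ext_iff, Prod.ext_iff]; rfl
  simp only [h]
  by_cases h1 : f.fst = e.snd <;> by_cases h2 : f.snd = e.fst <;> simp [h1, h2, eq_comm]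

lemma flipMatrix_mul {W : Type*} (M : Matrix G.Dart W ℝ) (e : G.Dart) (w : W) :
    (flipMatrix G * M) e w = M e.symm w := by
  simp [Matrix.mul_apply, flipMatrix]

lemma flipMatrix_mul_self : flipMatrix G * flipMatrix G = 1 := by
  ext e f
  rw [flipMatrix_mul]
  simp [flipMatrix, Matrix.one_apply, eq_comm]

lemma tailMatrix_mul_headMatrix : tailMatrix G * headMatrix G = G.adjMatrix ℝ := by
  ext v w
  simp only [Matrix.mul_apply, headMatrix, tailMatrix, SimpleGraph.adjMatrix_apply]
  simp only [← ite_and, mul_ite, mul_one, mul_zero]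
  split_ifs with h
  · rw [Finset.sum_eq_single (⟨(v, w), h⟩ : G.Dart)]
    · simp
    · intro d _ hd
      rw [if_neg]
      rintro ⟨h1, h2⟩
      exact hd (SimpleGraph.Dart.ext _ _ (Prod.ext h2 h1))
    · simp
  · refine Finset.sum_eq_zero fun d _ => if_neg ?_
    rintro ⟨h1, h2⟩
    exact h (by rw [← h1, ← h2]; exact d.adj)

lemma tailMatrix_mul_flipMatrix_mul_headMatrix :
    tailMatrix G * (flipMatrix G * headMatrix G)
      = Matrix.diagonal (fun v : V => (G.degree v : ℝ)) := by
  ext v w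
  rw [Matrix.mul_apply]
  simp only [flipMatrix_mul, headMatrix, tailMatrix, Matrix.diagonal_apply]
  change ∑ d : G.Dart, (if d.fst = v then (1 : ℝ) else 0) * (if d.fst = w then 1 else 0) = _
  split_ifs with h
  · subst h
    rw [← G.dart_fst_fiber_card_eq_degree v]
    simp only [mul_ite, mul_one, mul_zero, ← ite_and, and_self, Finset.sum_boole]
  · refine Finset.sum_eq_zero fun d _ => ?_
    by_cases h1 : d.fst = v
    · simp [h1, h]
    · simp [h1]

/-- Choosing an orientation of the edges, by means of an enumeration of `V`, identifies the darts
with two copies of the edge set, and `1 + u J` becomes the block matrix `[1, u; u, 1]`. -/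
lemma det_one_add_smul_flipMatrix (u : ℝ) :
    (1 + u • flipMatrix G).det = (1 - u ^ 2) ^ G.edgeFinset.card := by
  let c := Fintype.equivFin V
  let P := {d : G.Dart // c d.fst < c d.snd}
  let F : P ⊕ P → G.Dart := Sum.elim (fun p => p.1) (fun p => p.1.symm)
  have hF : Function.Bijective F := by
    constructor
    · rintro (⟨p, hp⟩ | ⟨p, hp⟩) (⟨q, hq⟩ | ⟨q, hq⟩) h
      · have h' : p = q := h
        subst h'; rfl
      · have h' : p = q.symm := h
        subst h'
        exact absurd hp (lt_asymm hq)
      · have h' : p.symm = q := h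
        subst h'
        exact absurd hp (lt_asymm hq)
      · have h' : p.symm = q.symm := h
        have : p = q := SimpleGraph.Dart.symm_involutive.injective h'
        subst this; rfl
    · intro d
      rcases lt_trichotomy (c d.fst) (c d.snd) with h | h | h
      · exact ⟨Sum.inl ⟨d, h⟩, rfl⟩
      · exact absurd (c.injective h) d.fst_ne_snd
      · exact ⟨Sum.inr ⟨d.symm, h⟩, d.symm_symm⟩
  let E : P ⊕ P ≃ G.Dart := Equiv.ofBijective F hF
  have hcard : Fintype.card P = G.edgeFinset.card := by
    have h1 := Fintype.card_congr E
    rw [Fintype.card_sum, G.dart_card_eq_twice_card_edges] at h1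
    omega
  have hEsymm : ∀ x, (E x).symm = E x.swap := by
    rintro (p | p)
    · rfl
    · exact p.1.symm_symm
  have hblock : (1 + u • flipMatrix G).submatrix E E
      = Matrix.fromBlocks 1 (u • (1 : Matrix P P ℝ)) (u • 1) 1 := by
    ext x y
    simp only [Matrix.submatrix_apply, Matrix.add_apply, Matrix.smul_apply, flipMatrix, hEsymm,
      E.injective.eq_iff, Matrix.one_apply, smul_eq_mul]
    rcases x with p | p <;> rcases y with q | q <;>
      simp [Matrix.one_apply, eq_comm]
  rw [← Matrix.det_submatrix_equiv_self E, hblock, Matrix.det_fromBlocks_one₁₁, ← hcard]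
  have : (1 : Matrix P P ℝ) - (u • 1) * (u • 1) = (1 - u ^ 2) • 1 := by
    rw [sub_smul, one_smul, Matrix.smul_mul, Matrix.one_mul, smul_smul, sq]
  rw [this, Matrix.det_smul, Matrix.det_one, mul_one]

lemma ihara_of_ne (hmn : Fintype.card V ≤ G.edgeFinset.card) (u : ℝ) (hu : 1 - u ^ 2 ≠ 0) :
    Matrix.det (1 - u • nbAdjMatrix G) =
      (1 - u ^ 2) ^ (G.edgeFinset.card - Fintype.card V) *
        Matrix.det (1 - u • G.adjMatrix ℝ +
          (u ^ 2) • (Matrix.diagonal (fun v : V => (G.degree v : ℝ)) - 1)) := by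
  set J := flipMatrix G with hJ
  set S := headMatrix G with hS
  set T := tailMatrix G with hT
  set a := 1 - u ^ 2 with ha
  have hinv : (1 + u • J) * (1 - u • J) = a • 1 := by
    have hJJ : J * J = 1 := flipMatrix_mul_self G
    simp only [add_mul, mul_sub, one_mul, mul_one, Matrix.smul_mul, Matrix.mul_smul, smul_smul,
      hJJ, ha, sub_smul, one_smul, sq]
    abel
  have hfac : 1 - u • nbAdjMatrix G
      = (1 + u • J) * (1 - ((u / a) • ((1 - u • J) * S)) * T) := by
    rw [mul_sub, mul_one, Matrix.smul_mul, Matrix.mul_smul, ← Matrix.mul_assoc,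
      ← Matrix.mul_assoc, hinv, Matrix.smul_mul, Matrix.smul_mul, smul_smul,
      div_mul_cancel₀ _ hu, Matrix.one_mul, nbAdjMatrix_eq, smul_sub]
    abel
  have hvert : 1 - u • G.adjMatrix ℝ +
      (u ^ 2) • (Matrix.diagonal (fun v : V => (G.degree v : ℝ)) - 1)
      = a • (1 - T * ((u / a) • ((1 - u • J) * S))) := by
    rw [← tailMatrix_mul_headMatrix, ← tailMatrix_mul_flipMatrix_mul_headMatrix, Matrix.mul_smul,
      smul_sub a, smul_smul, mul_div_cancel₀ _ hu, Matrix.sub_mul, Matrix.one_mul,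
      Matrix.smul_mul, Matrix.mul_sub, Matrix.mul_smul, smul_sub, smul_sub, smul_smul, ha,
      sub_smul, one_smul, ← sq]
    abel
  rw [hfac, Matrix.det_mul, det_one_add_smul_flipMatrix, Matrix.det_one_sub_mul_comm, hvert,
    Matrix.det_smul, ← mul_assoc, ← pow_add, Nat.sub_add_cancel hmn]

end

/-- Ihara's Theorem: `det(I - uB) = (1-u²)^{m-n} det(I - uA + u²(D - I))`. -/
theorem ihara {V : Type*} [Fintype V] [DecidableEq V]
    (G : SimpleGraph V) [DecidableRel G.Adj]
    (hdeg : ∀ v : V, 2 ≤ G.degree v)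
    (hmn : Fintype.card V ≤ G.edgeFinset.card) (u : ℝ) :
    Matrix.det (1 - u • nbAdjMatrix G) =
      (1 - u ^ 2) ^ (G.edgeFinset.card - Fintype.card V) *
        Matrix.det (1 - u • G.adjMatrix ℝ +
          (u ^ 2) • (Matrix.diagonal (fun v : V => (G.degree v : ℝ)) - 1)) := by
  have hdense : Dense (({1, -1} : Set ℝ)ᶜ) := by
    rw [Set.compl_eq_univ_sdiff]
    exact dense_univ.sdiff_finite (Set.toFinite _)
  refine congrFun (Continuous.ext_on hdense
    (f := fun u : ℝ => Matrix.det (1 - u • nbAdjMatrix G))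
    (g := fun u : ℝ => (1 - u ^ 2) ^ (G.edgeFinset.card - Fintype.card V) *
        Matrix.det (1 - u • G.adjMatrix ℝ +
          (u ^ 2) • (Matrix.diagonal (fun v : V => (G.degree v : ℝ)) - 1))) ?_ ?_ ?_) u
  · exact Continuous.matrix_det (by fun_prop)
  · exact Continuous.mul (by fun_prop) (Continuous.matrix_det (by fun_prop))
  · intro t ht
    refine ihara_of_ne G hmn t fun h => ht ?_
    exact (sq_eq_sq_iff_eq_or_eq_neg (a := t) (b := 1)).mp (by linarith)
end

section
/- Let G be a d-regular finite simple graph with d ≥ 2, n vertices and m edges (so m = nd/2 ≥ n), and let P̃ be its non-backtracking transition matrix and A its adjacency matrix. Then for every real number u, det(I_{2m} − u·P̃) = (1 − u²/(d−1)²)^{m − n} · det( I_n − (u/(d−1))·A + (u²/(d−1))·I_n ). -/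
/-!
Put `t = u / (d - 1)` and let `J` be the dart-reversal permutation matrix, `T` the dart-by-vertex
incidence matrix of heads and `S` the vertex-by-dart incidence matrix of tails. A dart `e` feeds
into `f` when `(T * S) e f = 1`, and backtracking is exactly `J e f = 1`, so
`1 - u • P̃ = (1 + t • J) - t • (T * S)`.

Since `J * J = 1`, the matrices `1 + t • J` and `1 - t • J` multiply to the scalar `1 - t ^ 2`. When
that scalar is nonzero, factoring `1 + t • J` out on the left and applying the identity
`det (1 - X * Y) = det (1 - Y * X)` moves the remaining determinant from darts to vertices, where
`S * T = A` and `S * J * T = d • 1`. Choosing an orientation of each edge splits the darts into two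
copies of the edge set, and then `det (1 + t • J) = (1 - t ^ 2) ^ m` is a two-by-two block
computation. The exponent `m - n` is a genuine subtraction because `2 m = n d ≥ 2 n`. Both
sides are continuous in `t`, which covers the two values `t = ± 1`.
-/

open BigOperators Finset

set_option linter.unusedSectionVars false

namespace Ihara

open Matrix

variable {V : Type*} [Fintype V] [DecidableEq V] (G : SimpleGraph V) [DecidableRel G.Adj]

/-- The permutation matrix of dart reversal. -/
def revMatrix : Matrix G.Dart G.Dart ℝ := fun e f => if f = e.symm then 1 else 0

/-- The dart-by-vertex incidence matrix of heads. -/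
def headMatrix : Matrix G.Dart V ℝ := fun e v => if e.snd = v then 1 else 0

/-- The vertex-by-dart incidence matrix of tails. -/
def tailMatrix : Matrix V G.Dart ℝ := fun v e => if e.fst = v then 1 else 0

lemma revMatrix_mul_apply {W : Type*} (M : Matrix G.Dart W ℝ) (e : G.Dart) (w : W) :
    (revMatrix G * M) e w = M e.symm w := by
  simp [Matrix.mul_apply, revMatrix]

lemma revMatrix_mul_self : revMatrix G * revMatrix G = 1 := by
  ext e f
  rw [revMatrix_mul_apply]
  simp [revMatrix, Matrix.one_apply, eq_comm]

lemma headMatrix_mul_tailMatrix_apply (e f : G.Dart) :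
    (headMatrix G * tailMatrix G) e f = if e.snd = f.fst then 1 else 0 := by
  simp [Matrix.mul_apply, headMatrix, tailMatrix, eq_comm]

lemma tailMatrix_mul_headMatrix : tailMatrix G * headMatrix G = G.adjMatrix ℝ := by
  ext v w
  simp only [Matrix.mul_apply, headMatrix, tailMatrix, SimpleGraph.adjMatrix_apply,
    ite_mul, one_mul, zero_mul, ← ite_and]
  by_cases h : G.Adj v w
  -- the only dart from `v` to `w` is `(v, w)` itself
  · rw [if_pos h, Finset.sum_eq_single (⟨(v, w), h⟩ : G.Dart)]
    · simp
    · rintro ⟨⟨a, b⟩, hab⟩ - hne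
      rw [if_neg]
      rintro ⟨rfl, rfl⟩
      exact hne rfl
    · simp
  · rw [if_neg h]
    refine Finset.sum_eq_zero fun e _ => if_neg ?_
    rintro ⟨rfl, rfl⟩
    exact h e.adj

/-- The entry at `(v, w)` counts the darts `e` with tail `v` whose reversal has head `w`; the latter
is again the tail of `e`. -/
lemma tailMatrix_mul_rev_mul_headMatrix {d : ℕ} (hreg : G.IsRegularOfDegree d) :
    tailMatrix G * (revMatrix G * headMatrix G) = (d : ℝ) • 1 := by
  ext v w
  rw [Matrix.mul_apply]
  simp only [revMatrix_mul_apply, headMatrix, tailMatrix,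
    Matrix.smul_apply, Matrix.one_apply, smul_eq_mul, mul_ite, mul_one, mul_zero]
  by_cases h : v = w
  · subst h
    have := G.dart_fst_fiber_card_eq_degree v
    rw [hreg.degree_eq] at this
    rw [if_pos rfl, ← this, Finset.card_filter]
    push_cast
    refine Finset.sum_congr rfl fun e _ => ?_
    by_cases h : e.fst = v <;> simp [h]
  · rw [if_neg h]
    refine Finset.sum_eq_zero fun e _ => ?_
    by_cases hv : e.fst = v
    · have hw : e.fst ≠ w := fun hw => h (hv.symm.trans hw)
      simp [hw]
    · simp [hv]

/-- The darts `(v, w)` for which `v` precedes `w` in a fixed enumeration of the vertices: one from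
each edge. -/
def IsPos (e : G.Dart) : Prop := Fintype.equivFin V e.fst < Fintype.equivFin V e.snd

lemma isPos_symm (e : G.Dart) : IsPos G e.symm ↔ ¬ IsPos G e := by
  have h : Fintype.equivFin V e.fst ≠ Fintype.equivFin V e.snd :=
    fun h => e.fst_ne_snd ((Fintype.equivFin V).injective h)
  change Fintype.equivFin V e.snd < Fintype.equivFin V e.fst ↔ _
  unfold IsPos
  rw [not_lt]
  exact ⟨le_of_lt, fun h' => lt_of_le_of_ne h' h.symm⟩

open Classical in
/-- Every dart is either positively oriented or the reversal of a positively oriented one. -/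
noncomputable def dartEquiv : {e : G.Dart // IsPos G e} ⊕ {e : G.Dart // IsPos G e} ≃ G.Dart where
  toFun := Sum.elim (fun e => e.1) (fun e => e.1.symm)
  invFun e := if h : IsPos G e then Sum.inl ⟨e, h⟩ else Sum.inr ⟨e.symm, (isPos_symm G e).2 h⟩
  left_inv := by
    rintro (⟨e, he⟩ | ⟨e, he⟩)
    · simp [he]
    · simp [isPos_symm, he]
  right_inv e := by
    by_cases h : IsPos G e <;> simp [h]

open Classical in
lemma card_isPos : Fintype.card {e : G.Dart // IsPos G e} = G.edgeFinset.card := by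
  have h := Fintype.card_congr (dartEquiv G)
  rw [Fintype.card_sum, G.dart_card_eq_twice_card_edges] at h
  lia

open Classical in
/-- Along the orientation splitting, reversal swaps the two copies of the edge set. -/
lemma revMatrix_submatrix :
    (revMatrix G).submatrix (dartEquiv G) (dartEquiv G) = fromBlocks 0 1 1 0 := by
  have key (a b : {e : G.Dart // IsPos G e}) : a.1 ≠ b.1.symm := fun h =>
    (isPos_symm G b.1).1 (h ▸ a.2) b.2
  ext (a | a) (b | b)
  · simp [revMatrix, dartEquiv, key]
  · simp [revMatrix, dartEquiv, Matrix.one_apply, Subtype.ext_iff,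
      (SimpleGraph.Dart.symm_involutive (G := G)).injective.eq_iff, eq_comm]
  · simp [revMatrix, dartEquiv, Matrix.one_apply, Subtype.ext_iff, eq_comm]
  · simp [revMatrix, dartEquiv, (key _ _).symm]

lemma det_one_add_smul_revMatrix (t : ℝ) :
    (1 + t • revMatrix G).det = (1 - t ^ 2) ^ G.edgeFinset.card := by
  classical
  have h : (1 + t • revMatrix G).submatrix (dartEquiv G) (dartEquiv G) =
      fromBlocks 1 (t • 1) (t • 1) 1 := by
    rw [submatrix_add, submatrix_smul]
    simp only [Pi.add_apply, Pi.smul_apply]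
    rw [revMatrix_submatrix, submatrix_one_equiv, ← fromBlocks_one, fromBlocks_smul,
      fromBlocks_add]
    simp
  have h2 : (1 : Matrix {e : G.Dart // IsPos G e} {e : G.Dart // IsPos G e} ℝ) -
      (t • 1) * (t • 1) = (1 - t ^ 2) • 1 := by
    simp [sub_smul, smul_smul, sq]
  rw [← det_submatrix_equiv_self (dartEquiv G), h, det_fromBlocks_one₁₁, h2, det_smul, det_one,
    mul_one, card_isPos]

lemma one_sub_smul_nbTransition {d : ℕ} (hreg : G.IsRegularOfDegree d) (u : ℝ) :
    1 - u • nbTransition G = 1 + (u / ((d : ℝ) - 1)) • revMatrix G -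
      (u / ((d : ℝ) - 1)) • (headMatrix G * tailMatrix G) := by
  ext e f
  have hf : f = e.symm ↔ e.snd = f.fst ∧ f.snd = e.fst := by
    rw [SimpleGraph.Dart.ext_iff, Prod.ext_iff]
    exact and_congr_left fun _ => eq_comm
  simp only [Matrix.sub_apply, Matrix.add_apply, Matrix.smul_apply,
    headMatrix_mul_tailMatrix_apply, revMatrix, nbTransition, hreg.degree_eq, hf, smul_eq_mul]
  by_cases h1 : e.snd = f.fst <;> by_cases h2 : f.snd = e.fst <;> simp [h1, h2]
  ring

lemma card_le_card_edgeFinset {d : ℕ} (hd : 2 ≤ d) (hreg : G.IsRegularOfDegree d) :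
    Fintype.card V ≤ G.edgeFinset.card := by
  have h := G.sum_degrees_eq_twice_card_edges
  simp only [hreg.degree_eq, Finset.sum_const, smul_eq_mul, Finset.card_univ] at h
  nlinarith

/-- The determinant formula away from `t = ± 1`, where `1 + t • J` is invertible with inverse
`(1 - t ^ 2)⁻¹ • (1 - t • J)`. -/
lemma det_of_ne {d : ℕ} (hd : 2 ≤ d) (hreg : G.IsRegularOfDegree d) {t : ℝ}
    (ht : 1 - t ^ 2 ≠ 0) :
    (1 + t • revMatrix G - t • (headMatrix G * tailMatrix G)).det =
      (1 - t ^ 2) ^ (G.edgeFinset.card - Fintype.card V) *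
        (1 - t • G.adjMatrix ℝ + (t ^ 2 * ((d : ℝ) - 1)) • (1 : Matrix V V ℝ)).det := by
  set c := 1 - t ^ 2 with hc
  have hinv : (1 + t • revMatrix G) * (1 - t • revMatrix G) = c • 1 := by
    simp only [add_mul, mul_sub, one_mul, mul_one, Matrix.smul_mul, Matrix.mul_smul,
      revMatrix_mul_self, smul_smul]
    rw [hc, sub_smul, one_smul, sq]
    abel
  have hfac : 1 + t • revMatrix G - t • (headMatrix G * tailMatrix G) =
      (1 + t • revMatrix G) *
        (1 - ((t / c) • ((1 - t • revMatrix G) * headMatrix G)) * tailMatrix G) := by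
    rw [mul_sub, mul_one, Matrix.smul_mul, Matrix.mul_smul, Matrix.mul_assoc,
      ← Matrix.mul_assoc (1 + t • revMatrix G), hinv, Matrix.smul_mul, Matrix.one_mul, smul_smul,
      div_mul_cancel₀ _ ht]
  have hvert : 1 - tailMatrix G * ((t / c) • ((1 - t • revMatrix G) * headMatrix G)) =
      c⁻¹ • (1 - t • G.adjMatrix ℝ + (t ^ 2 * ((d : ℝ) - 1)) • (1 : Matrix V V ℝ)) := by
    rw [Matrix.mul_smul, Matrix.sub_mul, Matrix.one_mul, Matrix.mul_sub, Matrix.smul_mul,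
      Matrix.mul_smul, tailMatrix_mul_headMatrix, tailMatrix_mul_rev_mul_headMatrix G hreg]
    ext v w
    simp only [Matrix.sub_apply, Matrix.add_apply, Matrix.smul_apply, smul_eq_mul]
    field_simp
    rw [hc]
    ring
  rw [hfac, det_mul, det_one_sub_mul_comm, hvert, det_smul, det_one_add_smul_revMatrix, ← hc,
    pow_sub₀ _ ht (card_le_card_edgeFinset G hd hreg), inv_pow]
  ring

lemma det_eq {d : ℕ} (hd : 2 ≤ d) (hreg : G.IsRegularOfDegree d) (t : ℝ) :
    (1 + t • revMatrix G - t • (headMatrix G * tailMatrix G)).det =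
      (1 - t ^ 2) ^ (G.edgeFinset.card - Fintype.card V) *
        (1 - t • G.adjMatrix ℝ + (t ^ 2 * ((d : ℝ) - 1)) • (1 : Matrix V V ℝ)).det := by
  have hdense : Dense ({1, -1} : Set ℝ)ᶜ := (Set.toFinite _).countable.dense_compl ℝ
  refine congrFun (Continuous.ext_on hdense
    (f := fun t : ℝ => (1 + t • revMatrix G - t • (headMatrix G * tailMatrix G)).det)
    (g := fun t : ℝ => (1 - t ^ 2) ^ (G.edgeFinset.card - Fintype.card V) *
        (1 - t • G.adjMatrix ℝ + (t ^ 2 * ((d : ℝ) - 1)) • (1 : Matrix V V ℝ)).det)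
    (Continuous.matrix_det (by fun_prop))
    (Continuous.mul (by fun_prop) (Continuous.matrix_det (by fun_prop))) ?_) t
  intro s hs
  refine det_of_ne G hd hreg fun h => hs ?_
  simpa using (sub_eq_zero.1 h).symm

end Ihara

/-- Ihara-type determinant formula for the non-backtracking transition matrix of a
`d`-regular graph. -/
theorem ihara_transition_regular {V : Type*} [Fintype V] [DecidableEq V]
    (G : SimpleGraph V) [DecidableRel G.Adj] (d : ℕ) (hd : 2 ≤ d)
    (hreg : G.IsRegularOfDegree d) (u : ℝ) :
    Matrix.det (1 - u • nbTransition G) =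
      (1 - u ^ 2 / ((d : ℝ) - 1) ^ 2) ^ (G.edgeFinset.card - Fintype.card V) *
        Matrix.det (1 - (u / ((d : ℝ) - 1)) • G.adjMatrix ℝ +
          (u ^ 2 / ((d : ℝ) - 1)) • (1 : Matrix V V ℝ)) := by
  have hd1 : (d : ℝ) - 1 ≠ 0 := by
    have : (2 : ℝ) ≤ d := by exact_mod_cast hd
    linarith
  rw [Ihara.one_sub_smul_nbTransition G hreg, Ihara.det_eq G hd hreg, div_pow]
  have h : u ^ 2 / ((d : ℝ) - 1) ^ 2 * ((d : ℝ) - 1) = u ^ 2 / ((d : ℝ) - 1) := by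
    field_simp
  rw [h]
end

section
/- Let G be a d-regular finite simple graph with d ≥ 2, n vertices and m edges, with adjacency matrix A and non-backtracking transition matrix P̃, both regarded as complex matrices. (a) If λ ∈ ℂ is an eigenvalue of A and μ ∈ ℂ satisfies (d−1)·μ² − λ·μ + 1 = 0, then μ is an eigenvalue of P̃ (equivalently μ = (λ ± √(λ² − 4(d−1)))/(2(d−1))). (b) If d ≥ 3 (so that m > n), then 1/(d−1) and −1/(d−1) are eigenvalues of P̃. -/
/-!
The proof exhibits eigenvectors. For a function `x` on darts of a `d`-regular graph,
`(P̃ x)(u,v) = (∑_{w ∼ v} x(v,w) - x(v,u)) / (d - 1)` (`nbTransitionC_mulVec_apply`).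

* If `A g = λ g` and `(d-1)μ² - λμ + 1 = 0`, then `x(u,v) = (d-1) μ g(v) - g(u)` satisfies
  `P̃ x = μ x`. It vanishes identically only if `g(u) = (d-1) μ g(v)` along every dart; following an
  edge back and forth then forces `(d-1) μ = ±1`. For `d ≥ 3` this `μ` is covered by the second part
  of the theorem, and for `d = 2` the function `x(u,v) = g(v)` is an eigenvector instead.
* If `x(v,u) = ε x(u,v)` with `ε = ±1` and the values of `x` on the darts leaving each vertex sum
  to `0`, then `P̃ x = -ε/(d-1) x`. Such functions `x` form the kernel of a linear map `ℂ^E → ℂ^V`,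
  and this kernel is nonzero for `d ≥ 3` because then `2|E| = d|V| > 2|V|`
  (`isRoot_charpoly_of_dart_sign`). For `ε = -1` an element of `ℂ^E` is turned into a function on
  darts with the help of an orientation of the edges.
-/


open BigOperators Finset

/-- The non-backtracking transition matrix of a graph, indexed by darts:
`P̃((u,v),(x,y)) = 1/(d_v - 1)` if `v = x` and `y ≠ u`, and `0` otherwise, here over `ℂ`. -/
noncomputable def nbTransitionC {V : Type*} [Fintype V] [DecidableEq V]
    (G : SimpleGraph V) [DecidableRel G.Adj] :
    Matrix G.Dart G.Dart ℂ :=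
  fun e f => if e.snd = f.fst ∧ f.snd ≠ e.fst then 1 / ((G.degree e.snd : ℂ) - 1) else 0

lemma Matrix.isRoot_charpoly_iff_exists_mulVec {ι : Type*} [Fintype ι] [DecidableEq ι]
    (M : Matrix ι ι ℂ) (μ : ℂ) :
    M.charpoly.IsRoot μ ↔ ∃ x : ι → ℂ, x ≠ 0 ∧ M.mulVec x = μ • x := by
  rw [Polynomial.IsRoot.def, Matrix.eval_charpoly, ← Matrix.exists_mulVec_eq_zero_iff]
  refine exists_congr fun x => and_congr_right fun _ => ?_
  rw [Matrix.sub_mulVec, sub_eq_zero, Matrix.scalar_apply, ← Matrix.smul_one_eq_diagonal,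
    Matrix.smul_mulVec, Matrix.one_mulVec, eq_comm]

section

variable {V : Type*} [Fintype V] [DecidableEq V] (G : SimpleGraph V) [DecidableRel G.Adj]

lemma nbTransitionC_mulVec_apply {d : ℕ} (hreg : G.IsRegularOfDegree d) (x : G.Dart → ℂ)
    (e : G.Dart) :
    (nbTransitionC G).mulVec x e =
      ((∑ f : G.Dart with f.fst = e.snd, x f) - x e.symm) / ((d : ℂ) - 1) := by
  have key : ∀ f : G.Dart, nbTransitionC G e f * x f =
      ((if f.fst = e.snd then x f else 0) - (if f = e.symm then x f else 0)) / ((d : ℂ) - 1) := by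
    intro f
    have hf : f = e.symm ↔ f.fst = e.snd ∧ f.snd = e.fst := by
      rw [SimpleGraph.Dart.ext_iff, Prod.ext_iff]
      rfl
    simp only [nbTransitionC, hreg.degree_eq, hf]
    by_cases h1 : f.fst = e.snd <;> by_cases h2 : f.snd = e.fst <;>
      simp [h1, h2, eq_comm, div_eq_inv_mul]
  simp only [Matrix.mulVec, dotProduct, key]
  rw [← Finset.sum_div, Finset.sum_sub_distrib, Finset.sum_filter]
  simp

lemma sum_dart_fst_eq_adjMatrix_mulVec (g : V → ℂ) (v : V) :
    ∑ f : G.Dart with f.fst = v, g f.snd = (G.adjMatrix ℂ).mulVec g v := by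
  rw [SimpleGraph.adjMatrix_mulVec_apply]
  refine Finset.sum_bij (fun f _ => f.snd) ?_ ?_ ?_ ?_
  · intro f hf
    obtain rfl : f.fst = v := by simpa using hf
    simp
  · intro f hf f' hf' h
    simp only [Finset.mem_filter, Finset.mem_univ, true_and] at hf hf'
    exact SimpleGraph.Dart.ext _ _ (Prod.ext (hf.trans hf'.symm) h)
  · intro w hw
    exact ⟨⟨(v, w), by simpa using hw⟩, by simp, rfl⟩
  · intros
    rfl

/-- The eigenvalue `-ε/(d-1)` for `ε = ±1`: the function `s` turns a function `y` on edges into the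
function `e ↦ s e * y e.edge` on darts, which is multiplied by `ε` when darts are reversed. As there
are more edges than vertices, some `y ≠ 0` gives outgoing sum `0` at every vertex. -/
lemma isRoot_charpoly_of_dart_sign {d : ℕ} [Nonempty V] (hd : 3 ≤ d)
    (hreg : G.IsRegularOfDegree d) (ε : ℂ) (s : G.Dart → ℂ) (hs0 : ∀ e, s e ≠ 0)
    (hs : ∀ e, s e.symm = ε * s e) :
    (nbTransitionC G).charpoly.IsRoot (-ε / ((d : ℂ) - 1)) := by
  let E : G.Dart → G.edgeSet := fun e => ⟨e.edge, e.edge_mem⟩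
  have hE : ∀ e : G.Dart, E e.symm = E e := fun e => Subtype.ext e.edge_symm
  let T : (G.edgeSet → ℂ) →ₗ[ℂ] (V → ℂ) :=
    { toFun := fun y v => ∑ f : G.Dart with f.fst = v, s f * y (E f)
      map_add' := fun y z => by
        ext v
        simp [mul_add, Finset.sum_add_distrib]
      map_smul' := fun c y => by
        ext v
        simp [Finset.mul_sum, mul_left_comm] }
  have hcard : Module.finrank ℂ (V → ℂ) < Module.finrank ℂ (G.edgeSet → ℂ) := by
    rw [Module.finrank_fintype_fun_eq_card, Module.finrank_fintype_fun_eq_card,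
      ← SimpleGraph.edgeFinset_card]
    have h := G.sum_degrees_eq_twice_card_edges
    simp only [hreg.degree_eq, Finset.sum_const, Finset.card_univ, smul_eq_mul] at h
    have hV : 0 < Fintype.card V := Fintype.card_pos
    nlinarith
  obtain ⟨y, hyT, hy0⟩ :=
    (Submodule.ne_bot_iff _).1 (LinearMap.ker_ne_bot_of_finrank_lt (f := T) hcard)
  rw [Matrix.isRoot_charpoly_iff_exists_mulVec]
  refine ⟨fun e => s e * y (E e), ?_, ?_⟩
  · intro h
    refine hy0 (funext fun p => ?_)
    obtain ⟨p, hp⟩ := p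
    induction p with
    | _ u v =>
      exact (mul_eq_zero.1 (congrFun h ⟨(u, v), hp⟩)).resolve_left (hs0 _)
  · ext e
    have hsum : ∑ f : G.Dart with f.fst = e.snd, s f * y (E f) = 0 :=
      congrFun (LinearMap.mem_ker.1 hyT) e.snd
    rw [nbTransitionC_mulVec_apply G hreg, hsum, hs, hE, Pi.smul_apply, smul_eq_mul]
    ring

lemma isRoot_charpoly_inv {d : ℕ} [Nonempty V] (hd : 3 ≤ d) (hreg : G.IsRegularOfDegree d) :
    (nbTransitionC G).charpoly.IsRoot (1 / ((d : ℂ) - 1)) := by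
  -- An enumeration of the vertices orients every edge.
  let φ := Fintype.equivFin V
  have h := isRoot_charpoly_of_dart_sign G hd hreg (-1)
    (fun e => if φ e.fst < φ e.snd then 1 else -1)
    (fun e => by split_ifs <;> simp)
    (fun e => by
      have hne : φ e.fst ≠ φ e.snd := φ.injective.ne e.adj.ne
      change (if φ e.snd < φ e.fst then (1 : ℂ) else -1) = _
      rcases lt_or_gt_of_ne hne with h | h <;> simp [h, h.not_gt])
  simpa using h

lemma isRoot_charpoly_neg_inv {d : ℕ} [Nonempty V] (hd : 3 ≤ d)
    (hreg : G.IsRegularOfDegree d) :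
    (nbTransitionC G).charpoly.IsRoot (-(1 / ((d : ℂ) - 1))) := by
  have h := isRoot_charpoly_of_dart_sign G hd hreg 1 (fun _ => 1) (by simp) (by simp)
  rwa [neg_div] at h

end

/-- Eigenvalues of the non-backtracking transition matrix of a `d`-regular graph:
(a) each root `μ` of `(d-1)μ² - λμ + 1` with `λ` an eigenvalue of `A` is an eigenvalue of `P̃`;
(b) if `d ≥ 3`, then `±1/(d-1)` are eigenvalues of `P̃`. -/
theorem nbTransition_regular_eigenvalues {V : Type*} [Fintype V] [DecidableEq V] [Nonempty V]
    (G : SimpleGraph V) [DecidableRel G.Adj] (d : ℕ) (hd : 2 ≤ d)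
    (hreg : G.IsRegularOfDegree d) :
    (∀ lam μ : ℂ, (Matrix.charpoly (G.adjMatrix ℂ)).IsRoot lam →
        ((d : ℂ) - 1) * μ ^ 2 - lam * μ + 1 = 0 →
        (Matrix.charpoly (nbTransitionC G)).IsRoot μ) ∧
    (3 ≤ d →
      (Matrix.charpoly (nbTransitionC G)).IsRoot (1 / ((d : ℂ) - 1)) ∧
      (Matrix.charpoly (nbTransitionC G)).IsRoot (-(1 / ((d : ℂ) - 1)))) := by
  refine ⟨fun lam μ hlam hμ => ?_, fun h3 =>
    ⟨isRoot_charpoly_inv G h3 hreg, isRoot_charpoly_neg_inv G h3 hreg⟩⟩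
  obtain ⟨g, hg0, hg⟩ := (Matrix.isRoot_charpoly_iff_exists_mulVec _ _).1 hlam
  have hsnd : ∀ v, ∑ f : G.Dart with f.fst = v, g f.snd = lam * g v := fun v => by
    rw [sum_dart_fst_eq_adjMatrix_mulVec, hg, Pi.smul_apply, smul_eq_mul]
  have hfst : ∀ v, ∑ f : G.Dart with f.fst = v, g f.fst = d * g v := fun v => by
    rw [Finset.sum_congr rfl (g := fun _ => g v) (fun f hf => by rw [(Finset.mem_filter.1 hf).2]),
      Finset.sum_const, G.dart_fst_fiber_card_eq_degree, hreg.degree_eq, nsmul_eq_mul]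
  have hd1 : (d : ℂ) - 1 ≠ 0 := by
    rw [sub_ne_zero]
    exact_mod_cast (by omega : d ≠ 1)
  by_cases hx : (fun e : G.Dart => ((d : ℂ) - 1) * μ * g e.snd - g e.fst) = 0
  · have hadj : ∀ u v, G.Adj u v → g u = ((d : ℂ) - 1) * μ * g v := fun u v huv =>
      (sub_eq_zero.1 (congrFun hx ⟨(u, v), huv⟩)).symm
    obtain ⟨v, hv⟩ := Function.ne_iff.1 hg0
    obtain ⟨w, hw⟩ : ∃ w, G.Adj v w := by
      rw [← SimpleGraph.degree_pos_iff_exists_adj, hreg.degree_eq]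
      omega
    -- Going from `v` to `w` and back multiplies `g v ≠ 0` by `((d - 1) μ)²`.
    have hsq : (((d : ℂ) - 1) * μ) ^ 2 = 1 := by
      refine mul_right_cancel₀ hv ?_
      rw [one_mul, sq, mul_assoc, ← hadj w v hw.symm, ← hadj v w hw]
    rcases hd.eq_or_lt with rfl | h3
    · rw [Matrix.isRoot_charpoly_iff_exists_mulVec]
      refine ⟨fun e => g e.snd, fun h => hv (congrFun h ⟨(w, v), hw.symm⟩), ?_⟩
      ext e
      have he := hadj e.fst e.snd e.adj
      rw [nbTransitionC_mulVec_apply G hreg, hsnd, Pi.smul_apply, smul_eq_mul]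
      change (lam * g e.snd - g e.fst) / _ = μ * g e.snd
      rw [he]
      push_cast at hsq hμ ⊢
      -- Here `μ² = 1`, so the quadratic equation says `lam = 2 μ`.
      have hlam2 : lam = 2 * μ := by linear_combination (-lam + μ) * hsq - μ * hμ
      rw [hlam2]
      ring
    · rcases (sq_eq_sq_iff_eq_or_eq_neg.1 (hsq.trans (one_pow 2).symm)) with h | h
      · rw [eq_div_of_mul_eq hd1 ((mul_comm _ _).trans h)]
        exact isRoot_charpoly_inv G h3 hreg
      · rw [eq_div_of_mul_eq hd1 ((mul_comm _ _).trans h), neg_div]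
        exact isRoot_charpoly_neg_inv G h3 hreg
  · rw [Matrix.isRoot_charpoly_iff_exists_mulVec]
    refine ⟨_, hx, ?_⟩
    ext e
    rw [nbTransitionC_mulVec_apply G hreg, Finset.sum_sub_distrib, ← Finset.mul_sum, hsnd, hfst,
      Pi.smul_apply, smul_eq_mul, div_eq_iff hd1]
    change ((d : ℂ) - 1) * μ * (lam * g e.snd) - d * g e.snd
      - (((d : ℂ) - 1) * μ * g e.fst - g e.snd) = _
    linear_combination (-((d : ℂ) - 1) * g e.snd) * hμ
end

section
/- Let G be a (c,d)-biregular finite simple graph: G is bipartite with parts X and Y, |X| = r, |Y| = s, r ≥ s ≥ 1, every vertex of X has degree c and every vertex of Y has degree d, where c, d ≥ 2. Let n = r + s be the number of vertices, m = rc = sd the number of edges, P̃ the non-backtracking transition matrix of G, and M the r × s biadjacency matrix. Then for every real number u, det(I_{2m} − u·P̃) = (1 − u²/((c−1)(d−1)))^{m − n} · (1 + u²/(d−1))^{r − s} · det( (1 + u²/(c−1))·(1 + u²/(d−1))·I_s − (u²/((c−1)(d−1)))·MᵀM ). -/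
/-!
Order the darts as `α → β` edges followed by `β → α` edges. Non-backtracking steps alternate
between the two kinds, so `1 - u P̃` becomes a block matrix with identity diagonal blocks and
off-diagonal blocks `-u/(d-1) (L Lᵀ - 1)` and `-u/(c-1) (K Kᵀ - 1)`, where `K` and `L` are the
incidence matrices of edges with vertices of `α` and `β`. Hence
`det (1 - u P̃) = det (1 - w (L Lᵀ - 1)(K Kᵀ - 1))` with `w = u²/((c-1)(d-1))`.

The biregularity enters through `Kᵀ K = c`, `Lᵀ L = d` and `Kᵀ L = M`. In particular
`(K Kᵀ - 1)⁻¹ = (c-1)⁻¹ K Kᵀ - 1`; factoring `1 - K Kᵀ` out leaves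
`(1 - w) - [K L] [(c-1)⁻¹ Kᵀ; -w Lᵀ]`, a scalar minus a product through `α ⊕ β`.
Sylvester's identity (`det_smul_one_sub_mul_comm`) turns this, with `m` edges and `n` vertices, into
`(1 - w)^(m - n)` times an
`n × n` determinant with scalar diagonal blocks, and a Schur complement reduces it to `β`
(`det_incidence`).
-/

open BigOperators Finset

open Matrix in
/-- Sylvester's determinant identity for rectangular factors. Being an identity of characteristic
polynomials, it also holds at `x = 0`. -/
theorem det_smul_one_sub_mul_comm {m n : Type*} [Fintype m] [Fintype n] [DecidableEq m]
    [DecidableEq n] (A : Matrix m n ℝ) (B : Matrix n m ℝ)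
    (h : Fintype.card n ≤ Fintype.card m) (x : ℝ) :
    (x • (1 : Matrix m m ℝ) - A * B).det =
      x ^ (Fintype.card m - Fintype.card n) * (x • (1 : Matrix n n ℝ) - B * A).det := by
  have := congrArg (Polynomial.eval x) (Matrix.charpoly_mul_comm_of_le A B h)
  simpa [Matrix.eval_charpoly, Matrix.smul_one_eq_diagonal] using this

open Matrix in
/-- The determinant computation in terms of abstract incidence matrices `K`, `L`: only their Gram
matrices matter. For `u ^ 2 = (c - 1) * (d - 1)` the scalar `1 - w` vanishes, but nothing is
divided by it. -/
theorem det_incidence {E α β : Type*} [Fintype E] [Fintype α] [Fintype β]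
    [DecidableEq E] [DecidableEq α] [DecidableEq β]
    (K : Matrix E α ℝ) (L : Matrix E β ℝ) (M : Matrix α β ℝ) (c d u : ℝ)
    (hc : 1 < c) (hd : 1 < d)
    (hK : Kᵀ * K = c • (1 : Matrix α α ℝ)) (hL : Lᵀ * L = d • (1 : Matrix β β ℝ))
    (hKL : Kᵀ * L = M)
    (hcard : Fintype.card (α ⊕ β) ≤ Fintype.card E)
    (hβα : Fintype.card β ≤ Fintype.card α) :
    (1 - (u ^ 2 / ((c - 1) * (d - 1))) • ((L * Lᵀ - 1) * (K * Kᵀ - 1))).det =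
      (1 - u ^ 2 / ((c - 1) * (d - 1))) ^ (Fintype.card E - Fintype.card (α ⊕ β)) *
        (1 + u ^ 2 / (d - 1)) ^ (Fintype.card α - Fintype.card β) *
        (((1 + u ^ 2 / (c - 1)) * (1 + u ^ 2 / (d - 1))) • (1 : Matrix β β ℝ) -
            (u ^ 2 / ((c - 1) * (d - 1))) • (Mᵀ * M)).det := by
  have hc0 : c - 1 ≠ 0 := by linarith
  have hd0 : d - 1 ≠ 0 := by linarith
  set w := u ^ 2 / ((c - 1) * (d - 1)) with hw
  have hA : 1 + u ^ 2 / (d - 1) ≠ 0 := by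
    have : 0 < d - 1 := by linarith
    positivity
  have hLK : Lᵀ * K = Mᵀ := by rw [← hKL, transpose_mul, transpose_transpose]
  have hEE : K * Kᵀ * (K * Kᵀ) = c • (K * Kᵀ) := by
    rw [Matrix.mul_assoc, ← Matrix.mul_assoc Kᵀ, hK]; simp
  -- The inverse of `K Kᵀ - 1` is read off from `(K Kᵀ)² = c K Kᵀ`.
  have hinv : ((c - 1)⁻¹ • (K * Kᵀ) - 1) * (K * Kᵀ - 1) = 1 := by
    rw [Matrix.sub_mul, Matrix.mul_sub, Matrix.smul_mul, hEE, Matrix.one_mul, Matrix.mul_one,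
      smul_smul]
    have : (c - 1)⁻¹ * c = 1 + (c - 1)⁻¹ := by field_simp; ring
    rw [this]
    module
  have hfac : 1 - w • ((L * Lᵀ - 1) * (K * Kᵀ - 1)) =
      ((1 - w) • (1 : Matrix E E ℝ) -
        fromCols K L * fromRows ((c - 1)⁻¹ • Kᵀ) (-w • Lᵀ)) * (1 - K * Kᵀ) := by
    rw [fromCols_mul_fromRows]
    have h1 : 1 - w • ((L * Lᵀ - 1) * (K * Kᵀ - 1)) =
        (((c - 1)⁻¹ • (K * Kᵀ) - 1) - w • (L * Lᵀ - 1)) * (K * Kᵀ - 1) := by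
      rw [Matrix.sub_mul _ (w • (L * Lᵀ - 1)), hinv, Matrix.smul_mul]
    rw [h1, ← neg_sub (K * Kᵀ) 1, Matrix.mul_neg, ← Matrix.neg_mul]
    congr 1
    simp only [Matrix.mul_smul]
    module
  have hdetK : (1 - K * Kᵀ).det = (1 - c) ^ Fintype.card α := by
    rw [det_one_sub_mul_comm, hK]
    rw [show (1 : Matrix α α ℝ) - c • (1 : Matrix α α ℝ) = (1 - c) • (1 : Matrix α α ℝ) by module]
    simp
  have hx : -((c - 1)⁻¹ * (1 + u ^ 2 / (d - 1))) ≠ 0 :=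
    neg_ne_zero.2 (mul_ne_zero (inv_ne_zero hc0) hA)
  have hblock : (1 - w) • (1 : Matrix (α ⊕ β) (α ⊕ β) ℝ) -
        fromRows ((c - 1)⁻¹ • Kᵀ) (-w • Lᵀ) * fromCols K L =
      fromBlocks ((-((c - 1)⁻¹ * (1 + u ^ 2 / (d - 1)))) • (1 : Matrix α α ℝ))
        (-(c - 1)⁻¹ • M) (w • Mᵀ) ((1 + u ^ 2 / (c - 1)) • (1 : Matrix β β ℝ)) := by
    rw [fromRows_mul_fromCols, ← fromBlocks_one, fromBlocks_smul, sub_eq_add_neg, fromBlocks_neg,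
      fromBlocks_add]
    simp only [Matrix.smul_mul, hK, hL, hKL, hLK, smul_smul, smul_zero, zero_add]
    congr 1
    · rw [← neg_smul, ← add_smul]; congr 1; rw [hw]; field_simp; ring
    · module
    · module
    · rw [← neg_smul, ← add_smul]; congr 1; rw [hw]; field_simp; ring
  have hdetB : ((1 - w) • (1 : Matrix (α ⊕ β) (α ⊕ β) ℝ) -
        fromRows ((c - 1)⁻¹ • Kᵀ) (-w • Lᵀ) * fromCols K L).det =
      (-((c - 1)⁻¹ * (1 + u ^ 2 / (d - 1)))) ^ Fintype.card α *
       ((1 + u ^ 2 / (c - 1)) • (1 : Matrix β β ℝ) - (w / (1 + u ^ 2 / (d - 1))) • (Mᵀ * M)).det := by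
    rw [hblock]
    set x := -((c - 1)⁻¹ * (1 + u ^ 2 / (d - 1))) with hxdef
    let _ : Invertible (x • (1 : Matrix α α ℝ)) :=
      ⟨x⁻¹ • 1, by simp [smul_smul, hx], by simp [smul_smul, hx]⟩
    have hi : ⅟(x • (1 : Matrix α α ℝ)) = x⁻¹ • 1 := rfl
    rw [det_fromBlocks₁₁, hi]
    congr 1
    · simp
    · congr 2
      simp only [Matrix.smul_mul, Matrix.mul_smul, Matrix.mul_one, smul_smul]
      congr 1
      rw [hxdef]
      field_simp
  have hscale : (((1 + u ^ 2 / (c - 1)) * (1 + u ^ 2 / (d - 1))) • (1 : Matrix β β ℝ) -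
      w • (Mᵀ * M)).det = (1 + u ^ 2 / (d - 1)) ^ Fintype.card β *
       ((1 + u ^ 2 / (c - 1)) • (1 : Matrix β β ℝ) -
         (w / (1 + u ^ 2 / (d - 1))) • (Mᵀ * M)).det := by
    rw [← det_smul, smul_sub, smul_smul, smul_smul, mul_div_cancel₀ _ hA, mul_comm (1 + u ^ 2 / (c - 1))]
  rw [hfac, det_mul, hdetK, det_smul_one_sub_mul_comm _ _ hcard, hdetB, hscale]
  have h1 : (-((c - 1)⁻¹ * (1 + u ^ 2 / (d - 1)))) ^ Fintype.card α * (1 - c) ^ Fintype.card α =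
      (1 + u ^ 2 / (d - 1)) ^ (Fintype.card α - Fintype.card β) *
        (1 + u ^ 2 / (d - 1)) ^ Fintype.card β := by
    rw [← mul_pow, ← pow_add, Nat.sub_add_cancel hβα]
    congr 1
    field_simp
    ring
  linear_combination (1 - w) ^ (Fintype.card E - Fintype.card (α ⊕ β)) *
    ((1 + u ^ 2 / (c - 1)) • (1 : Matrix β β ℝ) -
         (w / (1 + u ^ 2 / (d - 1))) • (Mᵀ * M)).det * h1

/-- The edges of a bipartite graph, each written with its end in `α` first. -/
abbrev BipEdge {α β : Type*} (G : SimpleGraph (α ⊕ β)) : Type _ :=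
  {p : α × β // G.Adj (Sum.inl p.1) (Sum.inr p.2)}

/-- An edge in the left summand is traversed from `α` to `β`, one in the right summand from
`β` to `α`. -/
def bipDart {α β : Type*} (G : SimpleGraph (α ⊕ β)) : BipEdge G ⊕ BipEdge G → G.Dart
  | Sum.inl e => ⟨(Sum.inl e.1.1, Sum.inr e.1.2), e.2⟩
  | Sum.inr e => ⟨(Sum.inr e.1.2, Sum.inl e.1.1), e.2.symm⟩

theorem bipDart_bijective {α β : Type*} (G : SimpleGraph (α ⊕ β))
    (hbip : ∀ x y : α ⊕ β, G.Adj x y → (x.isLeft ∧ y.isRight) ∨ (x.isRight ∧ y.isLeft)) :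
    Function.Bijective (bipDart G) := by
  constructor
  · rintro (⟨⟨a, b⟩, h⟩ | ⟨⟨a, b⟩, h⟩) (⟨⟨a', b'⟩, h'⟩ | ⟨⟨a', b'⟩, h'⟩) H <;>
      simp_all [bipDart]
  · rintro ⟨⟨x | x, y | y⟩, h⟩
    · simpa using hbip _ _ h
    · exact ⟨Sum.inl ⟨(x, y), h⟩, rfl⟩
    · exact ⟨Sum.inr ⟨(y, x), h.symm⟩, rfl⟩
    · simpa using hbip _ _ h

/-- The incidence matrix between edges and vertices of `α`. -/
def incLeft {α β : Type*} [DecidableEq α] (G : SimpleGraph (α ⊕ β)) :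
    Matrix (BipEdge G) α ℝ :=
  Matrix.of fun e a => if e.1.1 = a then 1 else 0

/-- The incidence matrix between edges and vertices of `β`. -/
def incRight {α β : Type*} [DecidableEq β] (G : SimpleGraph (α ⊕ β)) :
    Matrix (BipEdge G) β ℝ :=
  Matrix.of fun e b => if e.1.2 = b then 1 else 0

theorem sum_bipEdge {α β : Type*} [Fintype α] [Fintype β] (G : SimpleGraph (α ⊕ β))
    [DecidableRel G.Adj] (f : α → β → ℝ) :
    ∑ e : BipEdge G, f e.1.1 e.1.2 =
      ∑ a, ∑ b, if G.Adj (Sum.inl a) (Sum.inr b) then f a b else 0 := by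
  rw [← Fintype.sum_prod_type', ← Finset.sum_filter]
  exact (Finset.sum_subtype _ (by simp) (fun p : α × β => f p.1 p.2)).symm

theorem sum_adj_eq_degree {V : Type*} [Fintype V] (G : SimpleGraph V) [DecidableRel G.Adj]
    (v : V) : (∑ w, if G.Adj v w then (1 : ℝ) else 0) = G.degree v := by
  rw [Finset.sum_boole, ← SimpleGraph.card_neighborFinset_eq_degree,
    SimpleGraph.neighborFinset_eq_filter]

/-- Ihara-type determinant formula for the non-backtracking transition matrix of a
`(c,d)`-biregular graph with parts of sizes `r ≥ s`. -/
theorem ihara_transition_biregular {α β : Type*} [Fintype α] [Fintype β]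
    [DecidableEq α] [DecidableEq β]
    (G : SimpleGraph (α ⊕ β)) [DecidableRel G.Adj]
    (hbip : ∀ x y : α ⊕ β, G.Adj x y → (x.isLeft ∧ y.isRight) ∨ (x.isRight ∧ y.isLeft))
    (c d : ℕ) (hc : 2 ≤ c) (hd : 2 ≤ d)
    (hdegX : ∀ a : α, G.degree (Sum.inl a) = c)
    (hdegY : ∀ b : β, G.degree (Sum.inr b) = d)
    (hrs : Fintype.card β ≤ Fintype.card α) (hs : 1 ≤ Fintype.card β)
    (M : Matrix α β ℝ)
    (hM : ∀ (a : α) (b : β), M a b = if G.Adj (Sum.inl a) (Sum.inr b) then 1 else 0)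
    (u : ℝ) :
    Matrix.det (1 - u • nbTransition G) =
      (1 - u ^ 2 / (((c : ℝ) - 1) * ((d : ℝ) - 1))) ^
          (G.edgeFinset.card - Fintype.card (α ⊕ β)) *
        (1 + u ^ 2 / ((d : ℝ) - 1)) ^ (Fintype.card α - Fintype.card β) *
        Matrix.det
          (((1 + u ^ 2 / ((c : ℝ) - 1)) * (1 + u ^ 2 / ((d : ℝ) - 1))) • (1 : Matrix β β ℝ) -
            (u ^ 2 / (((c : ℝ) - 1) * ((d : ℝ) - 1))) • (M.transpose * M)) := by
  have hnl : ∀ a a' : α, ¬ G.Adj (Sum.inl a) (Sum.inl a') := fun a a' h => by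
    simpa using hbip _ _ h
  have hnr : ∀ b b' : β, ¬ G.Adj (Sum.inr b) (Sum.inr b') := fun b b' h => by
    simpa using hbip _ _ h
  have hc1 : (1 : ℝ) < c := by exact_mod_cast hc
  have hd1 : (1 : ℝ) < d := by exact_mod_cast hd
  have hc0 : (c : ℝ) - 1 ≠ 0 := by linarith
  have hd0 : (d : ℝ) - 1 ≠ 0 := by linarith
  let φ : BipEdge G ⊕ BipEdge G ≃ G.Dart := Equiv.ofBijective _ (bipDart_bijective G hbip)
  have hm : G.edgeFinset.card = Fintype.card (BipEdge G) := by
    have h1 := G.dart_card_eq_twice_card_edges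
    rw [← Fintype.card_congr φ, Fintype.card_sum] at h1
    omega
  have hcard : Fintype.card (α ⊕ β) ≤ Fintype.card (BipEdge G) := by
    have h1 := G.sum_degrees_eq_twice_card_edges
    rw [Fintype.sum_sum_type] at h1
    simp only [hdegX, hdegY, Finset.sum_const, Finset.card_univ, smul_eq_mul] at h1
    rw [← hm, Fintype.card_sum]
    nlinarith
  set K := incLeft G with hKdef
  set L := incRight G with hLdef
  have hK : K.transpose * K = (c : ℝ) • (1 : Matrix α α ℝ) := by
    ext a a'
    have h1 := sum_adj_eq_degree G (Sum.inl a)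
    rw [Fintype.sum_sum_type, hdegX] at h1
    simp only [hnl, if_false, Finset.sum_const_zero, zero_add] at h1
    simp only [Matrix.mul_apply, Matrix.transpose_apply, hKdef, incLeft, Matrix.of_apply]
    rw [sum_bipEdge G (fun x _ => (if x = a then (1 : ℝ) else 0) * if x = a' then 1 else 0)]
    rw [Finset.sum_eq_single a (fun x _ hx => by simp [hx]) (by simp)]
    by_cases h : a = a' <;> simp [h]
    subst h
    simpa using h1
  have hL : L.transpose * L = (d : ℝ) • (1 : Matrix β β ℝ) := by
    ext b b'
    have h1 := sum_adj_eq_degree G (Sum.inr b)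
    rw [Fintype.sum_sum_type, hdegY] at h1
    simp only [hnr, if_false, Finset.sum_const_zero, add_zero] at h1
    simp only [Matrix.mul_apply, Matrix.transpose_apply, hLdef, incRight, Matrix.of_apply]
    rw [sum_bipEdge G (fun _ y => (if y = b then (1 : ℝ) else 0) * if y = b' then 1 else 0),
      Finset.sum_comm]
    rw [Finset.sum_eq_single b (fun x _ hx => by simp [hx]) (by simp)]
    simp only [G.adj_comm (Sum.inr b)] at h1
    by_cases h : b = b' <;> simp [h]
    subst h
    simpa using h1
  have hKL : K.transpose * L = M := by
    ext a b
    simp only [Matrix.mul_apply, Matrix.transpose_apply, hKdef, hLdef, incLeft, incRight, Matrix.of_apply]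
    rw [sum_bipEdge G (fun x y => (if x = a then (1 : ℝ) else 0) * if y = b then 1 else 0)]
    rw [Finset.sum_eq_single a (fun x _ hx => by simp [hx]) (by simp),
      Finset.sum_eq_single b (fun x _ hx => by simp [hx]) (by simp), hM]
    simp
  have hblock : (1 - u • nbTransition G).submatrix φ φ =
      Matrix.fromBlocks 1 (-((u / ((d : ℝ) - 1)) • (L * L.transpose - 1)))
        (-((u / ((c : ℝ) - 1)) • (K * K.transpose - 1))) 1 := by
    have h1 : ∀ e f, (K * K.transpose) e f = if e.1.1 = f.1.1 then 1 else 0 := by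
      intro e f
      simp [hKdef, incLeft, Matrix.mul_apply, eq_comm]
    have h2 : ∀ e f, (L * L.transpose) e f = if e.1.2 = f.1.2 then 1 else 0 := by
      intro e f
      simp [hLdef, incRight, Matrix.mul_apply, eq_comm]
    have hXY : ∀ e f : BipEdge G, nbTransition G (φ (Sum.inl e)) (φ (Sum.inr f)) =
        if e.1.2 = f.1.2 ∧ f.1.1 ≠ e.1.1 then 1 / ((d : ℝ) - 1) else 0 := by
      intro e f
      change (if (Sum.inr e.1.2 : α ⊕ β) = Sum.inr f.1.2 ∧
        (Sum.inl f.1.1 : α ⊕ β) ≠ Sum.inl e.1.1 then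
          1 / ((G.degree (Sum.inr e.1.2) : ℝ) - 1) else 0) = _
      simp only [hdegY, Sum.inr.injEq, Sum.inl.injEq, ne_eq]
    have hYX : ∀ e f : BipEdge G, nbTransition G (φ (Sum.inr e)) (φ (Sum.inl f)) =
        if e.1.1 = f.1.1 ∧ f.1.2 ≠ e.1.2 then 1 / ((c : ℝ) - 1) else 0 := by
      intro e f
      change (if (Sum.inl e.1.1 : α ⊕ β) = Sum.inl f.1.1 ∧
        (Sum.inr f.1.2 : α ⊕ β) ≠ Sum.inr e.1.2 then
          1 / ((G.degree (Sum.inl e.1.1) : ℝ) - 1) else 0) = _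
      simp only [hdegX, Sum.inr.injEq, Sum.inl.injEq, ne_eq]
    ext e f
    rw [Matrix.submatrix_apply, Matrix.sub_apply, Matrix.one_apply, Matrix.smul_apply]
    simp only [φ.injective.eq_iff]
    rcases e with ⟨⟨a, b⟩, h⟩ | ⟨⟨a, b⟩, h⟩ <;> rcases f with ⟨⟨a', b'⟩, h'⟩ | ⟨⟨a', b'⟩, h'⟩
    · simp [φ, bipDart, nbTransition, Matrix.one_apply]
    · rw [hXY]
      by_cases hb : b = b' <;> by_cases ha : a = a' <;>
        simp [h2, ha, hb, eq_comm, div_eq_mul_inv]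
    · rw [hYX]
      by_cases hb : b = b' <;> by_cases ha : a = a' <;>
        simp [h1, ha, hb, eq_comm, div_eq_mul_inv]
    · simp [φ, bipDart, nbTransition, Matrix.one_apply]
  rw [← Matrix.det_submatrix_equiv_self φ, hblock, hm, ← det_incidence K L M c d u hc1 hd1 hK hL hKL hcard hrs,
    Matrix.det_fromBlocks_one₂₂]
  congr 2
  rw [Matrix.neg_mul, Matrix.mul_neg, neg_neg, Matrix.smul_mul, Matrix.mul_smul, smul_smul]
  congr 1
  field_simp
end

section
/- Let G be a (c,d)-biregular finite simple graph with parts X (size r, each vertex of degree c) and Y (size s, each vertex of degree d), r ≥ s ≥ 1, c, d ≥ 2, with n = r + s vertices and m = rc = sd edges. Let A be the adjacency matrix of G and P̃ its non-backtracking transition matrix, regarded as complex matrices. (a) If λ ∈ ℂ is an eigenvalue of A with λ ≠ 0, and μ ∈ ℂ satisfies (c−1)(d−1)·μ⁴ + (c + d − 2 − λ²)·μ² + 1 = 0, then μ is an eigenvalue of P̃. (b) If m > n, then 1/√((c−1)(d−1)) and −1/√((c−1)(d−1)) are eigenvalues of P̃. (c) If r > s, then i/√(d−1) and −i/√(d−1)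 are eigenvalues of P̃. -/
/-!
A vector `f` on darts satisfies `P̃ f = μ f` iff `F v - f (v,u) = (d_v - 1) μ f (u,v)` on every
dart `(u,v)`, where `F v = ∑_{y ∼ v} f (v,y)`. Write `q_v = d_v - 1`; in the biregular case
`q_u q_v = Q := (c-1)(d-1)` along every edge, and there are two sources of eigenvectors.

* If `Q μ² ≠ 1`, eliminating `f (v,u)` gives `f (u,v) = q_u μ F v - F u` up to a scalar, and the
  consistency condition is `(Q μ² + q_v) F v = q_v μ (A F) v` (`isRoot_of_vertex_function`).
  For (a), `F` is an eigenvector of `A` rescaled differently on the two sides; the quartic is the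
  vanishing of the resulting `2 × 2` determinant. For (c), `F` is supported on `X` and lies in the
  kernel of `A`, which exists because `|X| > |Y|`.
* If `Q μ² = 1`, one takes `F = 0`: then `f` is determined by a function on edges whose sums at all
  vertices vanish (`isRoot_of_edge_function`). The vertex sums on `X` and on `Y` have the same
  total, so there are at most `n - 1` independent conditions on `m = rc ≥ 2r ≥ n` unknowns
  (`exists_edge_function`). This gives (b), and also the case `Q μ² = 1` of (a), where the first
  construction may degenerate to `f = 0`.
-/

open BigOperators Finset

section General

variable {V : Type*} [Fintype V] [DecidableEq V] (G : SimpleGraph V) [DecidableRel G.Adj]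

lemma isRoot_charpoly_of_mulVec {ι : Type*} [Fintype ι] [DecidableEq ι] (M : Matrix ι ι ℂ)
    (μ : ℂ) (w : ι → ℂ) (hw : w ≠ 0) (h : M.mulVec w = μ • w) : M.charpoly.IsRoot μ := by
  rw [Polynomial.IsRoot.def, Matrix.eval_charpoly, ← Matrix.exists_mulVec_eq_zero_iff]
  refine ⟨w, hw, ?_⟩
  rw [Matrix.sub_mulVec, h]
  ext i
  simp [Matrix.scalar_apply]

lemma exists_mulVec_of_isRoot_charpoly {ι : Type*} [Fintype ι] [DecidableEq ι] (M : Matrix ι ι ℂ)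
    (μ : ℂ) (h : M.charpoly.IsRoot μ) : ∃ w : ι → ℂ, w ≠ 0 ∧ M.mulVec w = μ • w := by
  rw [Polynomial.IsRoot.def, Matrix.eval_charpoly, ← Matrix.exists_mulVec_eq_zero_iff] at h
  obtain ⟨w, hw, h⟩ := h
  refine ⟨w, hw, ?_⟩
  rw [Matrix.sub_mulVec, sub_eq_zero] at h
  rw [← h]
  ext i
  simp [Matrix.scalar_apply, Matrix.mulVec_diagonal]

lemma nbTransitionC_mulVec (k : V → V → ℂ) (e : G.Dart) :
    (nbTransitionC G).mulVec (fun f => k f.fst f.snd) e =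
      1 / ((G.degree e.snd : ℂ) - 1) *
        (∑ y ∈ G.neighborFinset e.snd, k e.snd y - k e.snd e.fst) := by
  have hmem : e.fst ∈ G.neighborFinset e.snd := by
    rw [SimpleGraph.mem_neighborFinset]; exact e.adj.symm
  rw [← Finset.sum_erase_eq_sub hmem, Finset.mul_sum]
  simp only [Matrix.mulVec, dotProduct, nbTransitionC, ite_mul, zero_mul]
  rw [← Finset.sum_filter]
  symm
  refine Finset.sum_bij
    (fun y hy => (⟨(e.snd, y), by simpa using (Finset.mem_erase.1 hy).2⟩ : G.Dart)) ?_ ?_ ?_ ?_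
  · intro y hy
    simpa using (Finset.mem_erase.1 hy).1
  · intro y _ z _ h
    simpa [SimpleGraph.Dart.ext_iff] using h
  · rintro ⟨⟨x, y⟩, hxy⟩ hf
    simp only [Finset.mem_filter, Finset.mem_univ, true_and] at hf
    obtain ⟨h1, h2⟩ := hf
    subst h1
    exact ⟨y, Finset.mem_erase.2 ⟨h2, by simpa using hxy⟩, rfl⟩
  · intro y _
    rfl

/-- The eigenvector equation for `P̃` with the denominators `d_v - 1` cleared. -/
lemma isRoot_of_dart_function (q : V → ℂ) (hq : ∀ v, q v ≠ 0)
    (hdeg : ∀ v, (G.degree v : ℂ) = q v + 1)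
    (μ : ℂ) (k : V → V → ℂ)
    (hk : ∀ u v, G.Adj u v → ∑ y ∈ G.neighborFinset v, k v y - k v u = q v * μ * k u v)
    (hne : ∃ u v, G.Adj u v ∧ k u v ≠ 0) :
    (nbTransitionC G).charpoly.IsRoot μ := by
  refine isRoot_charpoly_of_mulVec _ μ (fun f => k f.fst f.snd) ?_ ?_
  · obtain ⟨u, v, h, hkuv⟩ := hne
    intro h0
    exact hkuv (congrFun h0 ⟨(u, v), h⟩)
  · ext e
    rw [nbTransitionC_mulVec, hk _ _ e.adj, hdeg, add_sub_cancel_right]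
    have := hq e.snd
    simp only [Pi.smul_apply, smul_eq_mul]
    field_simp

/-- Eigenvectors of `P̃` of the form `f (u,v) = q_u μ F v - F u`. They are nonzero since
`∑_{y ∼ v} f (v,y) = (Q μ² - 1) F v`. -/
lemma isRoot_of_vertex_function (q : V → ℂ) (hq : ∀ v, q v ≠ 0)
    (hdeg : ∀ v, (G.degree v : ℂ) = q v + 1) (Q : ℂ) (hQ : ∀ u v, G.Adj u v → q u * q v = Q)
    (μ : ℂ) (hμ : Q * μ ^ 2 ≠ 1) (F : V → ℂ) (hF0 : F ≠ 0)
    (hF : ∀ v, (Q * μ ^ 2 + q v) * F v = q v * μ * ∑ y ∈ G.neighborFinset v, F y) :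
    (nbTransitionC G).charpoly.IsRoot μ := by
  have key : ∀ v, ∑ y ∈ G.neighborFinset v, (q v * μ * F y - F v) = (Q * μ ^ 2 - 1) * F v := by
    intro v
    rw [Finset.sum_sub_distrib, ← Finset.mul_sum, ← hF, Finset.sum_const,
      SimpleGraph.card_neighborFinset_eq_degree, nsmul_eq_mul, hdeg]
    ring
  refine isRoot_of_dart_function G q hq hdeg μ (fun u v => q u * μ * F v - F u) ?_ ?_
  · intro u v h
    rw [key, ← hQ u v h]
    ring
  · obtain ⟨v, hv⟩ := Function.ne_iff.1 hF0
    have h : ∑ y ∈ G.neighborFinset v, (q v * μ * F y - F v) ≠ 0 := by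
      rw [key]
      exact mul_ne_zero (sub_ne_zero.2 hμ) hv
    obtain ⟨y, hy, hne⟩ := Finset.exists_ne_zero_of_sum_ne_zero h
    exact ⟨v, y, by simpa using hy, hne⟩

end General

section Bipartite

variable {α β : Type*} [Fintype α] [Fintype β] [DecidableEq α] [DecidableEq β]
  (G : SimpleGraph (α ⊕ β)) [DecidableRel G.Adj]
  (hbip : ∀ x y : α ⊕ β, G.Adj x y → (x.isLeft ∧ y.isRight) ∨ (x.isRight ∧ y.isLeft))

include hbip

omit [DecidableEq α] [DecidableEq β] in
lemma sum_neighborFinset_inl {M : Type*} [AddCommMonoid M] (a : α) (F : α ⊕ β → M) :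
    ∑ y ∈ G.neighborFinset (Sum.inl a), F y =
      ∑ b, if G.Adj (Sum.inl a) (Sum.inr b) then F (Sum.inr b) else 0 := by
  have h : ∀ a', ¬ G.Adj (Sum.inl a) (Sum.inl a') := fun a' h => by simpa using hbip _ _ h
  rw [SimpleGraph.neighborFinset_eq_filter, Finset.sum_filter, Fintype.sum_sum_type]
  simp [h]

omit [DecidableEq α] [DecidableEq β] in
lemma sum_neighborFinset_inr {M : Type*} [AddCommMonoid M] (b : β) (F : α ⊕ β → M) :
    ∑ y ∈ G.neighborFinset (Sum.inr b), F y =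
      ∑ a, if G.Adj (Sum.inl a) (Sum.inr b) then F (Sum.inl a) else 0 := by
  have h : ∀ b', ¬ G.Adj (Sum.inr b) (Sum.inr b') := fun b' h => by simpa using hbip _ _ h
  rw [SimpleGraph.neighborFinset_eq_filter, Finset.sum_filter, Fintype.sum_sum_type]
  simp [h, G.adj_comm (Sum.inr b)]

/-- There is a nonzero function on the edges whose sum at every vertex is zero. -/
lemma exists_edge_function (c : ℕ) (hc : 2 ≤ c) (hdegX : ∀ a : α, G.degree (Sum.inl a) = c)
    (hrs : Fintype.card β ≤ Fintype.card α) (hs : 1 ≤ Fintype.card β) :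
    ∃ H : α → β → ℂ, (∃ a b, G.Adj (Sum.inl a) (Sum.inr b) ∧ H a b ≠ 0) ∧
      (∀ a b, ¬ G.Adj (Sum.inl a) (Sum.inr b) → H a b = 0) ∧
      (∀ a, ∑ b, H a b = 0) ∧ (∀ b, ∑ a, H a b = 0) := by
  classical
  let E := {p : α × β // G.Adj (Sum.inl p.1) (Sum.inr p.2)}
  let ext : (E → ℂ) →ₗ[ℂ] (α → β → ℂ) :=
    { toFun := fun h a b => if hab : G.Adj (Sum.inl a) (Sum.inr b) then h ⟨(a, b), hab⟩ else 0
      map_add' := by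
        intro x y; ext a b; simp only [Pi.add_apply]; split_ifs <;> simp
      map_smul' := by
        intro t x; ext a b; simp only [Pi.smul_apply, RingHom.id_apply]; split_ifs <;> simp }
  obtain ⟨b₀⟩ : Nonempty β := Fintype.card_pos_iff.1 hs
  -- The condition at `b₀` is left out: it follows from the others.
  let T : (E → ℂ) →ₗ[ℂ] (α → ℂ) × ({b : β // b ≠ b₀} → ℂ) :=
    { toFun := fun h => (fun a => ∑ b, ext h a b, fun b => ∑ a, ext h a b)
      map_add' := by
        intro x y; ext <;> simp [Finset.sum_add_distrib]
      map_smul' := by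
        intro t x; ext <;> simp [Finset.mul_sum] }
  have hE : Fintype.card E = Fintype.card α * c := by
    have : ∀ a : α, ∑ b : β, (if G.Adj (Sum.inl a) (Sum.inr b) then 1 else 0) = c := by
      intro a
      rw [← hdegX a, ← SimpleGraph.card_neighborFinset_eq_degree, Finset.card_eq_sum_ones,
        sum_neighborFinset_inl G hbip]
    rw [Fintype.card_subtype, Finset.card_filter, Fintype.sum_prod_type]
    simp [this]
  have hdim : Module.finrank ℂ ((α → ℂ) × ({b : β // b ≠ b₀} → ℂ)) < Module.finrank ℂ (E → ℂ) := by
    rw [Module.finrank_prod, Module.finrank_fintype_fun_eq_card, Module.finrank_fintype_fun_eq_card,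
      Module.finrank_fintype_fun_eq_card, hE, Fintype.card_subtype_compl, Fintype.card_subtype_eq]
    have : Fintype.card α * 2 ≤ Fintype.card α * c := Nat.mul_le_mul_left _ hc
    omega
  obtain ⟨h, hker, hne⟩ := Submodule.exists_mem_ne_zero_of_ne_bot
    (LinearMap.ker_ne_bot_of_finrank_lt (f := T) hdim)
  rw [LinearMap.mem_ker] at hker
  have hrow : ∀ a, ∑ b, ext h a b = 0 := fun a => congrFun (congrArg Prod.fst hker) a
  have hcol : ∀ b, b ≠ b₀ → ∑ a, ext h a b = 0 :=
    fun b hb => congrFun (congrArg Prod.snd hker) ⟨b, hb⟩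
  refine ⟨ext h, ?_, ?_, hrow, ?_⟩
  · obtain ⟨⟨⟨a, b⟩, hab⟩, hne⟩ := Function.ne_iff.1 hne
    refine ⟨a, b, hab, ?_⟩
    have : ext h a b = h ⟨(a, b), hab⟩ := dif_pos hab
    rwa [this]
  · intro a b hab
    exact dif_neg hab
  · intro b
    by_cases hb : b = b₀
    · subst hb
      have h1 : ∑ b', ∑ a, ext h a b' = 0 := by
        rw [Finset.sum_comm]
        exact Finset.sum_eq_zero fun a _ => hrow a
      rwa [Finset.sum_eq_single b (fun b' _ hb' => hcol b' hb') (by simp)] at h1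
    · exact hcol b hb

/-- Eigenvectors of `P̃` with `∑_{y ∼ v} f (v,y) = 0` at every vertex `v`. -/
lemma isRoot_of_edge_function (c d : ℕ) (hc : 2 ≤ c) (hd : 2 ≤ d)
    (hdegX : ∀ a : α, G.degree (Sum.inl a) = c) (hdegY : ∀ b : β, G.degree (Sum.inr b) = d)
    (hrs : Fintype.card β ≤ Fintype.card α) (hs : 1 ≤ Fintype.card β)
    (μ : ℂ) (hμ : ((c : ℂ) - 1) * ((d : ℂ) - 1) * μ ^ 2 = 1) :
    (nbTransitionC G).charpoly.IsRoot μ := by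
  obtain ⟨H, ⟨a₀, b₀, hab₀, hne⟩, hsupp, hrow, hcol⟩ :=
    exists_edge_function G hbip c hc hdegX hrs hs
  have hc1 : (c : ℂ) - 1 ≠ 0 := sub_ne_zero.2 (by norm_cast; omega)
  have hd1 : (d : ℂ) - 1 ≠ 0 := sub_ne_zero.2 (by norm_cast; omega)
  -- The factor on `Y`-to-`X` darts is forced by `f (v,u) = -(d_v - 1) μ f (u,v)`.
  let k : α ⊕ β → α ⊕ β → ℂ := fun x y => match x, y with
    | Sum.inl a, Sum.inr b => H a b
    | Sum.inr b, Sum.inl a => -(((d : ℂ) - 1) * μ) * H a b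
    | _, _ => 0
  refine isRoot_of_dart_function G (Sum.elim (fun _ => (c : ℂ) - 1) (fun _ => (d : ℂ) - 1))
    ?_ ?_ μ k ?_ ⟨Sum.inl a₀, Sum.inr b₀, hab₀, hne⟩
  · rintro (a | b) <;> simpa
  · rintro (a | b) <;> simp [hdegX, hdegY]
  · have h1 : ∀ a b, (if G.Adj (Sum.inl a) (Sum.inr b) then H a b else 0) = H a b := by
      intro a b
      split_ifs with h
      · rfl
      · exact (hsupp a b h).symm
    rintro (a | b) (a' | b') h
    · simpa using hbip _ _ h
    · rw [sum_neighborFinset_inr G hbip]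
      simp only [k, ← mul_ite_zero, h1, ← Finset.mul_sum, hcol, Sum.elim_inr]
      ring
    · rw [sum_neighborFinset_inl G hbip]
      simp only [k, h1, hrow, Sum.elim_inl]
      linear_combination H a' b * hμ
    · simpa using hbip _ _ h

/-- `isRoot_of_vertex_function` on the two sides of a biregular graph, after cancelling `q_v`. -/
lemma isRoot_of_two_functions (c d : ℕ) (hc : 2 ≤ c) (hd : 2 ≤ d)
    (hdegX : ∀ a : α, G.degree (Sum.inl a) = c) (hdegY : ∀ b : β, G.degree (Sum.inr b) = d)
    (μ : ℂ) (hμ : ((c : ℂ) - 1) * ((d : ℂ) - 1) * μ ^ 2 ≠ 1)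
    (F : α → ℂ) (K : β → ℂ) (hF0 : F ≠ 0)
    (hF : ∀ a, (((d : ℂ) - 1) * μ ^ 2 + 1) * F a =
      μ * ∑ b, if G.Adj (Sum.inl a) (Sum.inr b) then K b else 0)
    (hK : ∀ b, (((c : ℂ) - 1) * μ ^ 2 + 1) * K b =
      μ * ∑ a, if G.Adj (Sum.inl a) (Sum.inr b) then F a else 0) :
    (nbTransitionC G).charpoly.IsRoot μ := by
  have hc1 : (c : ℂ) - 1 ≠ 0 := sub_ne_zero.2 (by norm_cast; omega)
  have hd1 : (d : ℂ) - 1 ≠ 0 := sub_ne_zero.2 (by norm_cast; omega)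
  refine isRoot_of_vertex_function G (Sum.elim (fun _ => (c : ℂ) - 1) (fun _ => (d : ℂ) - 1))
    ?_ ?_ (((c : ℂ) - 1) * ((d : ℂ) - 1)) ?_ μ hμ (Sum.elim F K) ?_ ?_
  · rintro (a | b) <;> simpa
  · rintro (a | b) <;> simp [hdegX, hdegY]
  · rintro (a | b) (a' | b') h
    · simpa using hbip _ _ h
    · rfl
    · exact mul_comm _ _
    · simpa using hbip _ _ h
  · intro h0
    exact hF0 (funext fun a => congrFun h0 (Sum.inl a))
  · rintro (a | b)
    · rw [sum_neighborFinset_inl G hbip]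
      simp only [Sum.elim_inl, Sum.elim_inr]
      linear_combination ((c : ℂ) - 1) * hF a
    · rw [sum_neighborFinset_inr G hbip]
      simp only [Sum.elim_inl, Sum.elim_inr]
      linear_combination ((d : ℂ) - 1) * hK b

lemma isRoot_of_card_lt (c d : ℕ) (hc : 2 ≤ c) (hd : 2 ≤ d)
    (hdegX : ∀ a : α, G.degree (Sum.inl a) = c) (hdegY : ∀ b : β, G.degree (Sum.inr b) = d)
    (hlt : Fintype.card β < Fintype.card α)
    (μ : ℂ) (hμ : ((d : ℂ) - 1) * μ ^ 2 = -1) :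
    (nbTransitionC G).charpoly.IsRoot μ := by
  let T : (α → ℂ) →ₗ[ℂ] (β → ℂ) :=
    { toFun := fun F b => ∑ a, if G.Adj (Sum.inl a) (Sum.inr b) then F a else 0
      map_add' := by
        intro x y; ext b; simp [← Finset.sum_add_distrib, ite_add_ite]
      map_smul' := by
        intro t x; ext b; simp [Finset.mul_sum] }
  obtain ⟨F, hker, hne⟩ := Submodule.exists_mem_ne_zero_of_ne_bot
    (LinearMap.ker_ne_bot_of_finrank_lt (f := T) (by simpa using hlt))
  rw [LinearMap.mem_ker] at hker
  refine isRoot_of_two_functions G hbip c d hc hd hdegX hdegY μ ?_ F 0 hne ?_ ?_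
  · rw [mul_assoc, hμ]
    intro h
    have h0 : (c : ℂ) = 0 := by linear_combination -h
    have : c = 0 := by exact_mod_cast h0
    omega
  · intro a
    simp [hμ]
  · intro b
    have : ∑ a, (if G.Adj (Sum.inl a) (Sum.inr b) then F a else 0) = 0 := congrFun hker b
    simp [this]

lemma isRoot_of_adjMatrix_isRoot (c d : ℕ) (hc : 2 ≤ c) (hd : 2 ≤ d)
    (hdegX : ∀ a : α, G.degree (Sum.inl a) = c) (hdegY : ∀ b : β, G.degree (Sum.inr b) = d)
    (lam μ : ℂ) (hroot : (Matrix.charpoly (G.adjMatrix ℂ)).IsRoot lam) (hlam : lam ≠ 0)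
    (hquad : ((c : ℂ) - 1) * ((d : ℂ) - 1) * μ ^ 4 +
          ((c : ℂ) + (d : ℂ) - 2 - lam ^ 2) * μ ^ 2 + 1 = 0)
    (hμ : ((c : ℂ) - 1) * ((d : ℂ) - 1) * μ ^ 2 ≠ 1) :
    (nbTransitionC G).charpoly.IsRoot μ := by
  obtain ⟨g, hg0, hg⟩ := exists_mulVec_of_isRoot_charpoly _ _ hroot
  have hX : ∀ a, (∑ b, if G.Adj (Sum.inl a) (Sum.inr b) then g (Sum.inr b) else 0) =
      lam * g (Sum.inl a) := by
    intro a
    rw [← sum_neighborFinset_inl G hbip a g, ← SimpleGraph.adjMatrix_mulVec_apply, hg]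
    rfl
  have hY : ∀ b, (∑ a, if G.Adj (Sum.inl a) (Sum.inr b) then g (Sum.inl a) else 0) =
      lam * g (Sum.inr b) := by
    intro b
    rw [← sum_neighborFinset_inr G hbip b g, ← SimpleGraph.adjMatrix_mulVec_apply, hg]
    rfl
  have hμ0 : μ ≠ 0 := by
    rintro rfl
    simp at hquad
  refine isRoot_of_two_functions G hbip c d hc hd hdegX hdegY μ hμ
    (fun a => μ * lam * g (Sum.inl a)) (fun b => (((d : ℂ) - 1) * μ ^ 2 + 1) * g (Sum.inr b))
    ?_ ?_ ?_
  · -- An eigenvector for `lam ≠ 0` that vanishes on `X` vanishes on `Y` as well.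
    intro h0
    have hgX : ∀ a, g (Sum.inl a) = 0 := by
      intro a
      simpa [hμ0, hlam] using congrFun h0 a
    apply hg0
    ext (a | b)
    · exact hgX a
    · have := hY b
      simp only [hgX, ite_self, Finset.sum_const_zero] at this
      simpa [hlam] using this.symm
  · intro a
    simp only [← mul_ite_zero, ← Finset.mul_sum, hX]
    ring
  · intro b
    simp only [← mul_ite_zero, ← Finset.mul_sum, hY]
    linear_combination g (Sum.inr b) * hquad

end Bipartite

/-- Eigenvalues of the non-backtracking transition matrix of a `(c,d)`-biregular graph:
(a) roots of the quartic `(c-1)(d-1)μ⁴ + (c+d-2-λ²)μ² + 1` for nonzero adjacency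
eigenvalues `λ` are eigenvalues of `P̃`;
(b) if `m > n`, then `±1/√((c-1)(d-1))` are eigenvalues of `P̃`;
(c) if `r > s`, then `±i/√(d-1)` are eigenvalues of `P̃`. -/
theorem nbTransition_biregular_eigenvalues {α β : Type*} [Fintype α] [Fintype β]
    [DecidableEq α] [DecidableEq β]
    (G : SimpleGraph (α ⊕ β)) [DecidableRel G.Adj]
    (hbip : ∀ x y : α ⊕ β, G.Adj x y → (x.isLeft ∧ y.isRight) ∨ (x.isRight ∧ y.isLeft))
    (c d : ℕ) (hc : 2 ≤ c) (hd : 2 ≤ d)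
    (hdegX : ∀ a : α, G.degree (Sum.inl a) = c)
    (hdegY : ∀ b : β, G.degree (Sum.inr b) = d)
    (hrs : Fintype.card β ≤ Fintype.card α) (hs : 1 ≤ Fintype.card β) :
    (∀ lam μ : ℂ, (Matrix.charpoly (G.adjMatrix ℂ)).IsRoot lam → lam ≠ 0 →
        ((c : ℂ) - 1) * ((d : ℂ) - 1) * μ ^ 4 +
          ((c : ℂ) + (d : ℂ) - 2 - lam ^ 2) * μ ^ 2 + 1 = 0 →
        (Matrix.charpoly (nbTransitionC G)).IsRoot μ) ∧
    (Fintype.card (α ⊕ β) < G.edgeFinset.card →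
      (Matrix.charpoly (nbTransitionC G)).IsRoot
        (1 / (Real.sqrt (((c : ℝ) - 1) * ((d : ℝ) - 1)) : ℂ)) ∧
      (Matrix.charpoly (nbTransitionC G)).IsRoot
        (-(1 / (Real.sqrt (((c : ℝ) - 1) * ((d : ℝ) - 1)) : ℂ)))) ∧
    (Fintype.card β < Fintype.card α →
      (Matrix.charpoly (nbTransitionC G)).IsRoot
        (Complex.I / (Real.sqrt ((d : ℝ) - 1) : ℂ)) ∧
      (Matrix.charpoly (nbTransitionC G)).IsRoot
        (-(Complex.I / (Real.sqrt ((d : ℝ) - 1) : ℂ)))) := by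
  have hc1 : (0 : ℝ) < (c : ℝ) - 1 := by
    have : (2 : ℝ) ≤ c := by exact_mod_cast hc
    linarith
  have hd1 : (0 : ℝ) < (d : ℝ) - 1 := by
    have : (2 : ℝ) ≤ d := by exact_mod_cast hd
    linarith
  have hB := isRoot_of_edge_function G hbip c d hc hd hdegX hdegY hrs hs
  refine ⟨?_, ?_, ?_⟩
  · intro lam μ hroot hlam hquad
    by_cases hμ : ((c : ℂ) - 1) * ((d : ℂ) - 1) * μ ^ 2 = 1
    · exact hB μ hμ
    · exact isRoot_of_adjMatrix_isRoot G hbip c d hc hd hdegX hdegY lam μ hroot hlam hquad hμ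
  · intro _
    have hpos := mul_pos hc1 hd1
    have hsq : ((Real.sqrt (((c : ℝ) - 1) * ((d : ℝ) - 1)) : ℝ) : ℂ) ^ 2 =
        ((c : ℂ) - 1) * ((d : ℂ) - 1) := by
      rw [← Complex.ofReal_pow, Real.sq_sqrt hpos.le]
      push_cast
      ring
    have hne : ((c : ℂ) - 1) * ((d : ℂ) - 1) ≠ 0 := by exact_mod_cast hpos.ne'
    constructor <;> apply hB
    · rw [div_pow, hsq, one_pow, mul_one_div_cancel hne]
    · rw [neg_sq, div_pow, hsq, one_pow, mul_one_div_cancel hne]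
  · intro hlt
    have hsq : ((Real.sqrt ((d : ℝ) - 1) : ℝ) : ℂ) ^ 2 = (d : ℂ) - 1 := by
      rw [← Complex.ofReal_pow, Real.sq_sqrt hd1.le]
      push_cast
      ring
    have hne : (d : ℂ) - 1 ≠ 0 := by exact_mod_cast hd1.ne'
    constructor <;> apply isRoot_of_card_lt G hbip c d hc hd hdegX hdegY hlt
    · rw [div_pow, hsq, Complex.I_sq, mul_div_cancel₀ _ hne]
    · rw [neg_sq, div_pow, hsq, Complex.I_sq, mul_div_cancel₀ _ hne]
end

section
/- Let c, d ≥ 2 be integers and let λ be a real number with √(c−1) + √(d−1) ≤ λ ≤ √(cd). Set ρ = λ²/(cd) and ρ̃ = ( λ² − (c−1) − (d−1) + √( (λ² − (c−1) − (d−1))² − 4(c−1)(d−1) ) ) / ( 2(c−1)(d−1) ). Then (cd/(2(c−1)(d−1))) · ( 1 − (c − 1 + d − 1)/(c − 1 + 2√((c−1)(d−1)) + d − 1) ) ≤ ρ̃/ρ ≤ 1. -/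
/-!
Write `A = c - 1`, `B = d - 1`, `P = A * B`, `S = A + B`, `u = λ² - S`. The number
`X = (u + √(u² - 4P)) / 2` is the larger root of `X² - u X + P = 0`, and `ρ̃ = X / P`.
The hypotheses on `λ` say that `2√P ≤ u ≤ P + 1`, so the discriminant is nonnegative.

Lower bound: dropping the square root leaves `u / λ² = 1 - S / λ²`, which is increasing in `λ²`
and hence at least its value at `λ² = (√A + √B)² = A + 2√P + B`.

Upper bound: `u ≤ P + 1` gives `X ≤ P`, that is `ρ̃ ≤ 1`. By the quadratic equation
`λ² X = X² + S X + P`, and since `c d = P + S + 1`, the claim `c d X ≤ P λ²` becomes, after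
multiplication by `X`, the inequality `(X - P) ((S + 1) X + P) ≤ 0`.
-/

/-- The upper bound with denominators cleared: `c d X ≤ P λ²`, where `L = λ²` and `w` is the
square root of the discriminant, so that `u + w = 2 X`. -/
lemma upper_cleared {A B L w : ℝ} (hA : 1 ≤ A) (hB : 1 ≤ B) (hw0 : 0 ≤ w)
    (hw : w ^ 2 = (L - A - B) ^ 2 - 4 * A * B) (hu0 : 0 < L - A - B)
    (hL : L ≤ (A + 1) * (B + 1)) :
    (A + 1) * (B + 1) * (L - A - B + w) ≤ 2 * A * B * L := by
  have hP : 1 ≤ A * B := by nlinarith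
  have hXP : L - A - B + w ≤ 2 * (A * B) := by
    have h : w ≤ 2 * (A * B) - (L - A - B) := by
      refine (sq_le_sq₀ hw0 (by nlinarith)).mp ?_
      nlinarith
    linarith
  obtain ⟨X, hX⟩ : ∃ X, X = (L - A - B + w) / 2 := ⟨_, rfl⟩
  have hX0 : 0 < X := by rw [hX]; linarith
  have hquad : L * X = X ^ 2 + (A + B) * X + A * B := by
    rw [hX]; linear_combination (-1 / 4 : ℝ) * hw
  have hXle : X ≤ A * B := by rw [hX]; linarith
  have hprod : 0 ≤ (A * B - X) * ((A + B + 1) * X + A * B) :=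
    mul_nonneg (by linarith) (by positivity)
  have key : (A + 1) * (B + 1) * X ≤ A * B * L := by
    refine le_of_mul_le_mul_right ?_ hX0
    have h : A * B * L * X - (A + 1) * (B + 1) * X * X =
        (A * B - X) * ((A + B + 1) * X + A * B) := by
      linear_combination A * B * hquad
    linarith
  have h2 : L - A - B + w = 2 * X := by rw [hX]; ring
  rw [h2]; linarith


/-- Comparison of the squared mixing rates of the simple and non-backtracking random walks on a
`(c,d)`-biregular graph, in the case `√(c-1) + √(d-1) ≤ λ ≤ √(cd)`. -/
theorem biregular_mixing_rate_comparison (c d : ℕ) (hc : 2 ≤ c) (hd : 2 ≤ d) (lam : ℝ)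
    (hlow : Real.sqrt ((c : ℝ) - 1) + Real.sqrt ((d : ℝ) - 1) ≤ lam)
    (hhigh : lam ≤ Real.sqrt ((c : ℝ) * (d : ℝ))) :
    ((c : ℝ) * d / (2 * ((c : ℝ) - 1) * ((d : ℝ) - 1))) *
        (1 - (((c : ℝ) - 1) + ((d : ℝ) - 1)) /
          (((c : ℝ) - 1) + 2 * Real.sqrt (((c : ℝ) - 1) * ((d : ℝ) - 1)) + ((d : ℝ) - 1))) ≤
      ((lam ^ 2 - ((c : ℝ) - 1) - ((d : ℝ) - 1) +
          Real.sqrt ((lam ^ 2 - ((c : ℝ) - 1) - ((d : ℝ) - 1)) ^ 2 -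
            4 * ((c : ℝ) - 1) * ((d : ℝ) - 1))) /
        (2 * ((c : ℝ) - 1) * ((d : ℝ) - 1))) / (lam ^ 2 / ((c : ℝ) * d)) ∧
    ((lam ^ 2 - ((c : ℝ) - 1) - ((d : ℝ) - 1) +
          Real.sqrt ((lam ^ 2 - ((c : ℝ) - 1) - ((d : ℝ) - 1)) ^ 2 -
            4 * ((c : ℝ) - 1) * ((d : ℝ) - 1))) /
        (2 * ((c : ℝ) - 1) * ((d : ℝ) - 1))) / (lam ^ 2 / ((c : ℝ) * d)) ≤ 1 := by
  have hA : (1 : ℝ) ≤ (c : ℝ) - 1 := by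
    have : (2 : ℝ) ≤ c := by exact_mod_cast hc
    linarith
  have hB : (1 : ℝ) ≤ (d : ℝ) - 1 := by
    have : (2 : ℝ) ≤ d := by exact_mod_cast hd
    linarith
  obtain ⟨A, hAc⟩ : ∃ A : ℝ, A = (c : ℝ) - 1 := ⟨_, rfl⟩
  obtain ⟨B, hBd⟩ : ∃ B : ℝ, B = (d : ℝ) - 1 := ⟨_, rfl⟩
  have hcA : (c : ℝ) = A + 1 := by linarith
  have hdB : (d : ℝ) = B + 1 := by linarith
  rw [← hAc] at hA hlow ⊢
  rw [← hBd] at hB hlow ⊢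
  rw [hcA, hdB] at hhigh ⊢
  have hA0 : 0 < A := by linarith
  have hB0 : 0 < B := by linarith
  have hsA := Real.sq_sqrt hA0.le
  have hsB := Real.sq_sqrt hB0.le
  have hr : √(A * B) = √A * √B := Real.sqrt_mul hA0.le B
  have hr2 : √(A * B) ^ 2 = A * B := Real.sq_sqrt (by positivity)
  have hr0 : 0 < √(A * B) := Real.sqrt_pos.mpr (by positivity)
  have hlow0 : 0 ≤ √A + √B := by positivity
  have hlamlow : A + 2 * √(A * B) + B ≤ lam ^ 2 := by
    have h := pow_le_pow_left₀ hlow0 hlow 2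
    rw [hr]; nlinarith
  have hlamhigh : lam ^ 2 ≤ (A + 1) * (B + 1) := by
    have h := pow_le_pow_left₀ (hlow0.trans hlow) hhigh 2
    rwa [Real.sq_sqrt (by positivity)] at h
  generalize lam ^ 2 = L at *
  generalize √(A * B) = r at *
  have hL0 : 0 < L := by linarith
  have hdisc : 0 ≤ (L - A - B) ^ 2 - 4 * A * B := by nlinarith
  have hw0 := Real.sqrt_nonneg ((L - A - B) ^ 2 - 4 * A * B)
  have hw := Real.sq_sqrt hdisc
  generalize √((L - A - B) ^ 2 - 4 * A * B) = w at *
  have hform : (L - A - B + w) / (2 * A * B) / (L / ((A + 1) * (B + 1))) =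
      (A + 1) * (B + 1) / (2 * A * B) * ((L - A - B + w) / L) := by
    field_simp
  constructor
  · rw [hform]
    refine mul_le_mul_of_nonneg_left ?_ (by positivity)
    have h1 : (A + B) / L ≤ (A + B) / (A + 2 * r + B) :=
      div_le_div_of_nonneg_left (by positivity) (by positivity) hlamlow
    have h2 : (L - A - B + w) / L = 1 - (A + B) / L + w / L := by
      field_simp; ring
    have h3 : 0 ≤ w / L := by positivity
    linarith
  · rw [hform, div_mul_div_comm, div_le_one (by positivity)]
    exact upper_cleared hA hB hw0 hw (by linarith) hlamhigh
end
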